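/- arXiv:1003.2605 — 2 statements merged into one kernel-verified Lean document; each statement's English description precedes it below -/
import Mathlib

section
/- Let {S_i}_{i=1}^l be the affine IFS S_i(x) = A x + c_i on ℝ^d with ‖A‖ < 1, K its attractor, and π : Σ → K the canonical projection. Then lim_{n→∞} (1/n) log #{Q ∈ Q : A^n Q ∩ K ≠ ∅} exists and equals sup { h_π(σ,m) : m ∈ M_σ(Σ) }. -/
/-! Write `q n = A⁻ⁿ ∘ π`, and for a shift-invariant measure `μ` let `ρ_n(y)` be the `μ`-measure of
`{x | q n x ∈ ball y 1}`. Let `v` be the volume of the unit ball, which is the integral of `ρ_n`, and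
let `a_n = ∫ -ρ_n log ρ_n` be the entropy of this smoothed density. The theorem follows from two facts
about `a_n`: it grows like `n v h_π(σ,μ)`, and it is controlled by the number `N_n` of unit cubes met
by `A⁻ⁿ K`.

*Growth* (`tendsto_smoothEnt_div`). On the cylinder `[j]` the map `q (n + 1)` is `q n ∘ shift` up to
the translation by `A⁻⁽ⁿ⁺¹⁾ c_j`. Hence the joint entropy of the first digit and the smoothed position
is the same at scale `n + 1` for `q (n + 1)` and at scale `n` for `q n ∘ shift`, and the chain rule
expresses `a_{n+1} - a_n` as the difference of two conditional entropies of the first digit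
(`smoothEnt_succ`). Since `A⁻ⁿ` expands, the slices `{q n ∈ ball y 1}` shrink in the `π` coordinate, and
by `L¹`-approximation with uniformly continuous functions these two conditional entropies converge to
`v H_μ(P | σ⁻¹π⁻¹γ)` and `v H_μ(P | π⁻¹γ)` (`tendsto_condTerm`). So the increments tend to
`v h_π(σ,μ)`, and so does `a_n / n`.

*Upper bound* (`eventually_lt_log_ncard`). The density `ρ_n` is supported in a bounded neighbourhood of
the `N_n` cubes, so `a_n ≤ v log N_n + O(1)` and `h_π(σ,μ) ≤ liminf (log N_n) / n`.

*Lower bound* (`exists_projEntropy_ge`). Fix `k`. By pigeonhole on lattice points modulo a constant,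
at least `c N_k` of the cubes are pairwise far apart, and points of `A⁻ᵏ K` in them provide `M ≥ c N_k`
words of length `k` whose cylinders are separated at scale `k`. The shift-average of the Bernoulli
measure that concatenates these words independently and uniformly has `ρ_n ≤ l ^ k * M⁻¹ ^ (n / k)`, so
`a_n ≥ v ((n / k) log M - k log l)`, and its projection entropy is at least
`(log M) / k ≥ (log N_k) / k - O(1 / k)`.

Together these squeeze `(log N_n) / n` to the supremum, which is finite because a projection entropy is
at most the number `l` of symbols. -/


/- Projection pressure for affine IFS (Wang–Chen).
   Statement 4: box-counting corollary (Corollary 2.1). -/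

open MeasureTheory Filter Set

noncomputable section

/-- The symbolic space `Σ = {1,…,l}^ℕ`. -/
abbrev Sig (l : ℕ) := ℕ → Fin l

/-- The left shift `σ` on `Σ`. -/
def shift {l : ℕ} (x : Sig l) : Sig l := fun n => x (n + 1)

/-- First-coordinate cylinder partition `P = {[j] : 1 ≤ j ≤ l}`. -/
def cylP {l : ℕ} : Fin l → Set (Sig l) := fun j => {x | x 0 = j}

/-- Conditional entropy `H_μ(ξ | 𝒜) = ∫ I_μ(ξ|𝒜) dμ` of a finite partition `ξ`
    given a sub-σ-algebra `𝒜`, where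
    `I_μ(ξ|𝒜) = -∑_{A ∈ ξ} 1_A · log E_μ(1_A | 𝒜)`. -/
def condEntropyPart {α : Type*} [MeasurableSpace α] {ι : Type*} [Fintype ι]
    (μ : Measure α) (part : ι → Set α) (m : MeasurableSpace α) : ℝ :=
  ∑ i : ι, ∫ x in part i,
    -Real.log ((μ[(part i).indicator (fun _ => (1 : ℝ)) | m]) x) ∂μ

/-- Projection entropy `h_π(σ,μ) = H_μ(P | σ⁻¹π⁻¹γ) − H_μ(P | π⁻¹γ)`. -/
def projEntropy {l : ℕ} {E : Type*} [mE : MeasurableSpace E]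
    (π : Sig l → E) (μ : Measure (Sig l)) : ℝ :=
  condEntropyPart μ cylP (MeasurableSpace.comap (fun x => π (shift x)) mE)
    - condEntropyPart μ cylP (MeasurableSpace.comap π mE)

/-- `itIm S K x n = S_{x 0} ∘ ⋯ ∘ S_{x (n-1)} (K)`. -/
def itIm {l : ℕ} {E : Type*} (S : Fin l → E → E) (K : Set E) : Sig l → ℕ → Set E
  | _, 0 => K
  | x, n + 1 => S (x 0) '' itIm S K (shift x) n

/-- The half-open unit cube `[0,1)^d + α` of the partition `𝒬` of `ℝ^d`. -/
def cube (d : ℕ) (α : Fin d → ℤ) : Set (EuclideanSpace ℝ (Fin d)) :=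
  {x | ∀ i, (α i : ℝ) ≤ x i ∧ x i < (α i : ℝ) + 1}

/-- Birkhoff sum `S_n g (x) = ∑_{i<n} g(σ^i x)`. -/
def birk {l : ℕ} (g : Sig l → ℝ) (n : ℕ) (x : Sig l) : ℝ :=
  ∑ i ∈ Finset.range n, g (shift^[i] x)

/-- The partition function
`∑_{Q ∈ 𝒬_n, Q ∩ K ≠ ∅} sup_{α ∈ π⁻¹(Q ∩ K)} exp((S_n f∘π)(α))`,
where `𝒬_n = {Aⁿ Q : Q ∈ 𝒬}`; cubes not meeting `K` contribute `0`. -/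
def Zsum {d l : ℕ} (A : EuclideanSpace ℝ (Fin d) →L[ℝ] EuclideanSpace ℝ (Fin d))
    (K : Set (EuclideanSpace ℝ (Fin d))) (π : Sig l → EuclideanSpace ℝ (Fin d))
    (f : EuclideanSpace ℝ (Fin d) → ℝ) (n : ℕ) : ℝ :=
  ∑' α : Fin d → ℤ,
    ⨆ β ∈ π ⁻¹' ((⇑(A ^ n) '' cube d α) ∩ K), Real.exp (birk (fun y => f (π y)) n β)

namespace BoxCounting

open Real (negMulLog)
open scoped Topology

/-! ### Smoothed densities and Jensen defects -/

/-- The Euclidean space `ℝ^d`. -/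
abbrev Eu (d : ℕ) := EuclideanSpace ℝ (Fin d)

/-- The volume of the unit ball of `ℝ^d`. -/
def ballVol (d : ℕ) : ℝ := volume.real (Metric.ball (0 : Eu d) 1)

/-- The smoothed density of the push-forward of `μ` under `q`: the measure of the set of points
that `q` sends to within distance `1` of `y`. Up to the factor `ballVol d` it is a probability
density on `ℝ^d`. -/
def dens {Ω : Type*} [MeasurableSpace Ω] {d : ℕ} (μ : Measure Ω) (q : Ω → Eu d) (y : Eu d) : ℝ :=
  μ.real (q ⁻¹' Metric.ball y 1)

lemma volume_real_ball {d : ℕ} (y : Eu d) : volume.real (Metric.ball y 1) = ballVol d := by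
  simp only [ballVol, Measure.real]
  rw [Measure.addHaar_ball_center]

lemma ballVol_pos (d : ℕ) : 0 < ballVol d := by
  unfold ballVol
  rw [Measure.real, ENNReal.toReal_pos_iff]
  exact ⟨Metric.measure_ball_pos _ _ one_pos, measure_ball_lt_top⟩

section Fubini

variable {Ω : Type*} [MeasurableSpace Ω] {d : ℕ}

lemma measurableSet_near {q : Ω → Eu d} (hq : Measurable q) :
    MeasurableSet {p : Ω × Eu d | q p.1 ∈ Metric.ball p.2 1} := by
  simp only [Metric.mem_ball]
  exact measurableSet_lt ((hq.comp measurable_fst).dist measurable_snd) measurable_const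

/-- Fubini: averaging an integrable function over all slices `q ⁻¹' ball y 1` multiplies its
integral by the volume of the unit ball. -/
lemma smoothing (μ : Measure Ω) [IsFiniteMeasure μ] {q : Ω → Eu d} (hq : Measurable q)
    {h : Ω → ℝ} (hh : Integrable h μ) :
    Integrable (fun y => ∫ x in q ⁻¹' Metric.ball y 1, h x ∂μ) volume ∧
      ∫ y, ∫ x in q ⁻¹' Metric.ball y 1, h x ∂μ = ballVol d * ∫ x, h x ∂μ := by
  set N : Set (Ω × Eu d) := {p | q p.1 ∈ Metric.ball p.2 1} with hN
  have hNm : MeasurableSet N := measurableSet_near hq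
  set F : Ω × Eu d → ℝ := N.indicator (fun p => h p.1) with hF
  have e1 : ∀ x y, F (x, y) = (Metric.ball (q x) 1).indicator (fun _ => h x) y := by
    intro x y
    simp only [hF, hN, indicator, mem_ofPred_eq, Metric.mem_ball, dist_comm]
  have e2 : ∀ y x, F (x, y) = (q ⁻¹' Metric.ball y 1).indicator h x := by
    intro y x
    simp only [hF, hN, indicator, mem_ofPred_eq, Metric.mem_ball, mem_preimage]
  have hFi : Integrable F (μ.prod volume) := by
    rw [integrable_prod_iff]
    · constructor
      · refine Eventually.of_forall fun x => ?_
        simp only [e1]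
        rw [integrable_indicator_iff measurableSet_ball]
        exact integrableOn_const measure_ball_lt_top.ne
      · have : (fun x => ∫ y, ‖F (x, y)‖) = fun x => ballVol d * ‖h x‖ := by
          funext x
          simp only [e1, norm_indicator_eq_indicator_norm]
          rw [integral_indicator measurableSet_ball, setIntegral_const, volume_real_ball, smul_eq_mul]
        rw [this]
        exact hh.norm.const_mul _
    · exact (hh.aestronglyMeasurable.comp_fst).indicator hNm
  have e3 : ∀ y, ∫ x, F (x, y) ∂μ = ∫ x in q ⁻¹' Metric.ball y 1, h x ∂μ := by
    intro y
    simp only [e2]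
    rw [integral_indicator (hq measurableSet_ball)]
  have e4 : ∀ x, ∫ y, F (x, y) = ballVol d * h x := by
    intro x
    simp only [e1]
    rw [integral_indicator measurableSet_ball, setIntegral_const, volume_real_ball, smul_eq_mul]
  constructor
  · have := hFi.integral_prod_right
    simpa only [e3] using this
  · have := integral_integral_swap (f := fun x y => F (x, y)) (μ := μ) (ν := volume) hFi
    simp only [e3, e4] at this
    rw [← this, integral_const_mul]

lemma dens_eq_integral (μ : Measure Ω) [IsFiniteMeasure μ] (q : Ω → Eu d) (y : Eu d) :
    dens μ q y = ∫ _ in q ⁻¹' Metric.ball y 1, (1 : ℝ) ∂μ := by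
  simp [dens]

lemma integrable_dens (μ : Measure Ω) [IsFiniteMeasure μ] {q : Ω → Eu d} (hq : Measurable q) :
    Integrable (dens μ q) volume := by
  have := (smoothing μ hq (integrable_const (1 : ℝ))).1
  simpa only [← dens_eq_integral] using this

lemma integral_dens (μ : Measure Ω) [IsProbabilityMeasure μ] {q : Ω → Eu d} (hq : Measurable q) :
    ∫ y, dens μ q y = ballVol d := by
  have := (smoothing μ hq (integrable_const (1 : ℝ))).2
  simp only [← dens_eq_integral] at this
  rw [this]; simp

lemma measurable_dens (μ : Measure Ω) [IsFiniteMeasure μ] {q : Ω → Eu d} (hq : Measurable q) :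
    Measurable (dens μ q) :=
  (measurable_measure_prodMk_right (measurableSet_near hq)).ennreal_toReal

lemma dens_nonneg (μ : Measure Ω) (q : Ω → Eu d) (y : Eu d) : 0 ≤ dens μ q y :=
  measureReal_nonneg

lemma dens_restrict_le (μ : Measure Ω) [IsFiniteMeasure μ] (q : Ω → Eu d) (P : Set Ω) (y : Eu d) :
    dens (μ.restrict P) q y ≤ dens μ q y := by
  unfold dens Measure.real
  exact ENNReal.toReal_mono (measure_ne_top _ _) (Measure.restrict_apply_le _ _)

lemma negMulLog_le_one {x : ℝ} (h0 : 0 ≤ x) : negMulLog x ≤ 1 := by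
  have := Real.negMulLog_le_one_sub_self h0
  linarith

end Fubini

section Slice

/-- Uniform continuity of `x ↦ -x log x` on `[0,1]`, in the form of an affine modulus. -/
lemma negMulLog_modulus {ε : ℝ} (hε : 0 < ε) : ∃ C : ℝ, 0 ≤ C ∧ ∀ a ∈ Icc (0 : ℝ) 1,
    ∀ b ∈ Icc (0 : ℝ) 1, |negMulLog a - negMulLog b| ≤ ε + C * |a - b| := by
  have huc : UniformContinuousOn negMulLog (Icc (0 : ℝ) 1) :=
    isCompact_Icc.uniformContinuousOn_of_continuous Real.continuous_negMulLog.continuousOn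
  rw [Metric.uniformContinuousOn_iff] at huc
  obtain ⟨δ, hδ, h⟩ := huc ε hε
  refine ⟨1 / δ, by positivity, fun a ha b hb => ?_⟩
  by_cases hab : |a - b| < δ
  · have := h a ha b hb (by simpa [Real.dist_eq] using hab)
    rw [Real.dist_eq] at this
    have : 0 ≤ 1 / δ * |a - b| := by positivity
    linarith
  · push Not at hab
    have h1 : (1 : ℝ) ≤ 1 / δ * |a - b| := by
      rw [div_mul_eq_mul_div, le_div_iff₀ hδ]; linarith
    have : |negMulLog a - negMulLog b| ≤ 1 := by
      have := Real.negMulLog_nonneg ha.1 ha.2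
      have := Real.negMulLog_nonneg hb.1 hb.2
      have := negMulLog_le_one ha.1
      have := negMulLog_le_one hb.1
      rw [abs_le]; constructor <;> linarith
    linarith

/-- The Jensen defect of `negMulLog` for a `[0,1]`-valued function `g` is small when `g` is close
in `L¹` to a function `G` that is nearly equal to a constant `c`. -/
lemma slice_estimate {Ω : Type*} [MeasurableSpace Ω] (μ : Measure Ω) [IsFiniteMeasure μ]
    {g G : Ω → ℝ} (hg : Measurable g) (hg01 : ∀ x, g x ∈ Icc (0 : ℝ) 1)
    (hG : Integrable G μ) {c ω : ℝ} (hω : ∀ᵐ x ∂μ, |G x - c| ≤ ω) {ε C : ℝ} (hC : 0 ≤ C)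
    (hφ : ∀ a ∈ Icc (0 : ℝ) 1, ∀ b ∈ Icc (0 : ℝ) 1,
      |negMulLog a - negMulLog b| ≤ ε + C * |a - b|) :
    |μ.real univ * negMulLog ((∫ x, g x ∂μ) / μ.real univ) - ∫ x, negMulLog (g x) ∂μ|
      ≤ (ε + 2 * C * ω) * μ.real univ + 2 * C * ∫ x, |g x - G x| ∂μ := by
  have hgi : Integrable g μ := Integrable.of_bound hg.aestronglyMeasurable 1
    (Eventually.of_forall fun x => by
      rw [Real.norm_eq_abs, abs_of_nonneg (hg01 x).1]; exact (hg01 x).2)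
  have hpi : Integrable (fun x => negMulLog (g x)) μ := Integrable.of_bound
    (Real.continuous_negMulLog.measurable.comp hg).aestronglyMeasurable 1
    (Eventually.of_forall fun x => by
      rw [Real.norm_eq_abs, abs_of_nonneg (Real.negMulLog_nonneg (hg01 x).1 (hg01 x).2)]
      exact negMulLog_le_one (hg01 x).1)
  set ρ := μ.real univ with hρ
  rcases eq_or_ne ρ 0 with h0 | h0
  · have : μ = 0 := by
      rw [hρ, measureReal_eq_zero_iff] at h0
      exact Measure.measure_univ_eq_zero.1 h0
    subst this
    simp [h0]
  have hρpos : 0 < ρ := lt_of_le_of_ne measureReal_nonneg (Ne.symm h0)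
  set r := (∫ x, g x ∂μ) / ρ with hr
  have hIg0 : 0 ≤ ∫ x, g x ∂μ := integral_nonneg fun x => (hg01 x).1
  have hIg1 : ∫ x, g x ∂μ ≤ ρ := by
    have := integral_mono hgi (integrable_const (1 : ℝ)) (fun x => (hg01 x).2)
    simpa using this
  have hr01 : r ∈ Icc (0 : ℝ) 1 := ⟨by positivity, by rw [hr, div_le_one hρpos]; exact hIg1⟩
  have hgc : Integrable (fun x => |g x - c|) μ := (hgi.sub (integrable_const c)).abs
  have hgG : Integrable (fun x => |g x - G x|) μ := (hgi.sub hG).abs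
  -- comparison with the constant `c`
  have hB : ∫ x, |g x - c| ∂μ ≤ (∫ x, |g x - G x| ∂μ) + ω * ρ := by
    have h1 : ∫ x, |g x - c| ∂μ ≤ ∫ x, (|g x - G x| + ω) ∂μ := by
      refine integral_mono_ae hgc (hgG.add (integrable_const ω)) ?_
      filter_upwards [hω] with x hx
      calc |g x - c| = |(g x - G x) + (G x - c)| := by ring_nf
        _ ≤ |g x - G x| + |G x - c| := abs_add_le _ _
        _ ≤ _ := by linarith
    rw [integral_add hgG (integrable_const ω), integral_const, smul_eq_mul] at h1
    linarith [mul_comm ω ρ]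
  have hrc : |r - c| * ρ ≤ ∫ x, |g x - c| ∂μ := by
    have h1 : (r - c) * ρ = ∫ x, (g x - c) ∂μ := by
      rw [integral_sub hgi (integrable_const c), integral_const, smul_eq_mul, ← hρ, hr]
      field_simp
    calc |r - c| * ρ = |(r - c) * ρ| := by rw [abs_mul, abs_of_pos hρpos]
      _ ≤ _ := by rw [h1]; exact abs_integral_le_integral_abs
  have hrg : ∫ x, |r - g x| ∂μ ≤ |r - c| * ρ + ∫ x, |g x - c| ∂μ := by
    have h1 : ∫ x, |r - g x| ∂μ ≤ ∫ x, (|r - c| + |g x - c|) ∂μ := by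
      refine integral_mono ((integrable_const r).sub hgi).abs
        ((integrable_const _).add hgc) fun x => ?_
      calc |r - g x| = |(r - c) + -(g x - c)| := by ring_nf
        _ ≤ |r - c| + |-(g x - c)| := abs_add_le _ _
        _ = _ := by rw [abs_neg]
    rw [integral_add (integrable_const _) hgc, integral_const, smul_eq_mul] at h1
    linarith [mul_comm |r - c| ρ]
  have hI : ρ * negMulLog r - ∫ x, negMulLog (g x) ∂μ
      = ∫ x, (negMulLog r - negMulLog (g x)) ∂μ := by
    rw [integral_sub (integrable_const _) hpi, integral_const, smul_eq_mul]
  rw [hI]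
  have hrgi : Integrable (fun x => |r - g x|) μ := ((integrable_const r).sub hgi).abs
  calc |∫ x, (negMulLog r - negMulLog (g x)) ∂μ|
      ≤ ∫ x, |negMulLog r - negMulLog (g x)| ∂μ := abs_integral_le_integral_abs
    _ ≤ ∫ x, (ε + C * |r - g x|) ∂μ :=
        integral_mono ((integrable_const _).sub hpi).abs
          ((integrable_const _).add (hrgi.const_mul C)) fun x => hφ r hr01 _ (hg01 x)
    _ = ε * ρ + C * ∫ x, |r - g x| ∂μ := by
        rw [integral_add (integrable_const _) (hrgi.const_mul C), integral_const, smul_eq_mul,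
          integral_const_mul, mul_comm ρ]
    _ ≤ ε * ρ + C * (2 * ((∫ x, |g x - G x| ∂μ) + ω * ρ)) := by
        gcongr; linarith
    _ = _ := by ring

end Slice

/-! ### Conditional probabilities as limits of slice ratios -/

/-- The conditional probability of `P` given `p` is a `[0,1]`-valued measurable function of `p`. -/
lemma exists_condProb_version {Ω : Type*} [mΩ : MeasurableSpace Ω] {d : ℕ} (μ : Measure Ω)
    [IsProbabilityMeasure μ] {p : Ω → Eu d} (hp : Measurable p) {P : Set Ω}
    (hP : MeasurableSet P) :
    ∃ k : Eu d → ℝ, Measurable k ∧ (∀ z, k z ∈ Icc (0 : ℝ) 1) ∧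
      μ[P.indicator (fun _ => (1 : ℝ)) | MeasurableSpace.comap p inferInstance] =ᵐ[μ] k ∘ p := by
  have hle : MeasurableSpace.comap p inferInstance ≤ mΩ := hp.comap_le
  have hint : Integrable (P.indicator (fun _ => (1 : ℝ))) μ :=
    (integrable_const (1 : ℝ)).indicator hP
  obtain ⟨k0, hk0, hk0e⟩ := (stronglyMeasurable_condExp
    (m := MeasurableSpace.comap p inferInstance) (μ := μ)
    (f := P.indicator (fun _ => (1 : ℝ)))).exists_eq_measurable_comp
  refine ⟨fun z => max 0 (min (k0 z) 1), ?_, fun z => ⟨le_max_left _ _,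
    max_le zero_le_one (min_le_right _ _)⟩, ?_⟩
  · exact measurable_const.max (hk0.measurable.min measurable_const)
  · have h0 : 0 ≤ᵐ[μ] μ[P.indicator (fun _ => (1 : ℝ)) | MeasurableSpace.comap p inferInstance] :=
      condExp_nonneg (Eventually.of_forall fun x => indicator_nonneg (fun _ _ => zero_le_one) x)
    have h1 : μ[P.indicator (fun _ => (1 : ℝ)) | MeasurableSpace.comap p inferInstance] ≤ᵐ[μ]
        μ[(fun _ => (1 : ℝ)) | MeasurableSpace.comap p inferInstance] :=
      condExp_mono hint (integrable_const _)
        (Eventually.of_forall fun x => indicator_le_self' (fun _ _ => zero_le_one) x)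
    rw [condExp_const hle] at h1
    filter_upwards [h0, h1] with x hx0 hx1
    have e : μ[P.indicator (fun _ => (1 : ℝ)) | MeasurableSpace.comap p inferInstance] x
        = k0 (p x) := congrFun hk0e x
    simp only [Function.comp_apply, Pi.zero_apply] at *
    rw [e] at hx0 hx1 ⊢
    rw [min_eq_left hx1, max_eq_right hx0]

lemma exists_uniformContinuous_approx {d : ℕ} (ν : Measure (Eu d)) [IsFiniteMeasure ν]
    {k : Eu d → ℝ} (hk : Integrable k ν) {η : ℝ} (hη : 0 < η) :
    ∃ G : Eu d → ℝ, UniformContinuous G ∧ Measurable G ∧ Integrable G ν ∧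
      ∫ z, |k z - G z| ∂ν ≤ η := by
  obtain ⟨G, h1, h2, h3, h4⟩ := hk.exists_hasCompactSupport_integral_sub_le hη
  exact ⟨G, h1.uniformContinuous_of_continuous h3, h3.measurable, h4, h2⟩

/-- The smoothed density of `B ∘ p` restricted to `P` is obtained by integrating over the slice
the conditional probability of `P` given `p`, because the slice is `p`-measurable. -/
lemma dens_restrict_eq {Ω : Type*} [MeasurableSpace Ω] {d : ℕ} (μ : Measure Ω)
    [IsProbabilityMeasure μ] {p : Ω → Eu d} (hp : Measurable p) {P : Set Ω}
    (hP : MeasurableSet P) {k : Eu d → ℝ}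
    (hk : μ[P.indicator (fun _ => (1 : ℝ)) | MeasurableSpace.comap p inferInstance] =ᵐ[μ] k ∘ p)
    {B : Eu d → Eu d} (hB : Measurable B) (y : Eu d) :
    dens (μ.restrict P) (B ∘ p) y = ∫ x in (B ∘ p) ⁻¹' Metric.ball y 1, k (p x) ∂μ := by
  have hs : MeasurableSet[MeasurableSpace.comap p inferInstance] ((B ∘ p) ⁻¹' Metric.ball y 1) :=
    ⟨B ⁻¹' Metric.ball y 1, hB measurableSet_ball, rfl⟩
  have hint : Integrable (P.indicator (fun _ => (1 : ℝ))) μ :=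
    (integrable_const (1 : ℝ)).indicator hP
  have h1 := setIntegral_condExp (μ := μ) hp.comap_le hint hs
  have h2 : ∫ x in (B ∘ p) ⁻¹' Metric.ball y 1,
      (μ[P.indicator (fun _ => (1 : ℝ)) | MeasurableSpace.comap p inferInstance]) x ∂μ
      = ∫ x in (B ∘ p) ⁻¹' Metric.ball y 1, k (p x) ∂μ :=
    integral_congr_ae (ae_restrict_of_ae hk)
  rw [← h2, h1, dens, measureReal_restrict_apply ((hB.comp hp) measurableSet_ball),
    setIntegral_indicator hP, setIntegral_const]
  simp

lemma ratio_mem {Ω : Type*} [MeasurableSpace Ω] {d : ℕ} (μ : Measure Ω)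
    [IsFiniteMeasure μ] (q : Ω → Eu d) (P : Set Ω) (y : Eu d) :
    dens (μ.restrict P) q y / dens μ q y ∈ Icc (0 : ℝ) 1 :=
  ⟨div_nonneg (dens_nonneg _ _ _) (dens_nonneg _ _ _),
    div_le_one_of_le₀ (dens_restrict_le _ _ _ _) (dens_nonneg _ _ _)⟩

lemma integrable_condTerm {Ω : Type*} [MeasurableSpace Ω] {d : ℕ} (μ : Measure Ω)
    [IsFiniteMeasure μ] {q : Ω → Eu d} (hq : Measurable q) (P : Set Ω) :
    Integrable (fun y => dens μ q y * negMulLog (dens (μ.restrict P) q y / dens μ q y))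
      volume := by
  refine (integrable_dens μ hq).mono' ?_ (Eventually.of_forall fun y => ?_)
  · exact ((measurable_dens μ hq).mul (Real.continuous_negMulLog.measurable.comp
      ((measurable_dens _ hq).div (measurable_dens μ hq)))).aestronglyMeasurable
  · have h := ratio_mem μ q P y
    have h0 := Real.negMulLog_nonneg h.1 h.2
    have h1 := negMulLog_le_one h.1
    rw [Real.norm_eq_abs, abs_of_nonneg (mul_nonneg (dens_nonneg _ _ _) h0)]
    exact mul_le_of_le_one_right (dens_nonneg _ _ _) h1

/-- If `B n` expands, in that points whose images are within distance `2` lie within `δ n → 0`,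
then conditioning on the smoothed value of `B n ∘ p` becomes conditioning on `p` in the limit: a
slice `(B n ∘ p) ⁻¹' ball y 1` has small image under `p`, so a uniformly continuous approximation
`G` of the conditional probability is nearly constant on it. -/
lemma tendsto_condTerm {Ω : Type*} [MeasurableSpace Ω] {d : ℕ} (μ : Measure Ω)
    [IsProbabilityMeasure μ] {p : Ω → Eu d} (hp : Measurable p) {P : Set Ω}
    (hP : MeasurableSet P) {B : ℕ → Eu d → Eu d} (hB : ∀ n, Measurable (B n)) {δ : ℕ → ℝ}
    (hδ : Tendsto δ atTop (𝓝 0))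
    (hBδ : ∀ n z z', dist (B n z) (B n z') < 2 → dist z z' ≤ δ n) :
    Tendsto (fun n => ∫ y, dens μ (B n ∘ p) y *
        negMulLog (dens (μ.restrict P) (B n ∘ p) y / dens μ (B n ∘ p) y)) atTop
      (𝓝 (ballVol d * ∫ x, negMulLog ((μ[P.indicator (fun _ => (1 : ℝ)) |
        MeasurableSpace.comap p inferInstance]) x) ∂μ)) := by
  obtain ⟨k, hkm, hk01, hk⟩ := exists_condProb_version μ hp hP
  have hlim : ∫ x, negMulLog ((μ[P.indicator (fun _ => (1 : ℝ)) |
      MeasurableSpace.comap p inferInstance]) x) ∂μ = ∫ x, negMulLog (k (p x)) ∂μ :=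
    integral_congr_ae (hk.fun_comp negMulLog)
  rw [hlim, Metric.tendsto_atTop]
  intro ε0 hε0
  set v := ballVol d with hv
  have hvpos : 0 < v := ballVol_pos d
  -- `η` is chosen so that the final error `ε0 / 4 + 4 * C * v * η` is at most `3 * ε0 / 4`
  obtain ⟨C, hC, hφ⟩ := negMulLog_modulus (ε := ε0 / (4 * v)) (by positivity)
  set η := ε0 / (8 * (C + 1) * v) with hη
  have hηpos : 0 < η := by positivity
  have : IsProbabilityMeasure (μ.map p) := Measure.isProbabilityMeasure_map hp.aemeasurable
  have hki : Integrable k (μ.map p) := Integrable.of_bound hkm.aestronglyMeasurable 1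
    (Eventually.of_forall fun x => by
      rw [Real.norm_eq_abs, abs_of_nonneg (hk01 x).1]; exact (hk01 x).2)
  obtain ⟨G, hGu, hGm, hGi, hGη⟩ := exists_uniformContinuous_approx (μ.map p) hki hηpos
  have hkp : Integrable (fun x => k (p x)) μ := hki.comp_measurable hp
  have hGp : Integrable (fun x => G (p x)) μ := hGi.comp_measurable hp
  have hkG : Integrable (fun x => |k (p x) - G (p x)|) μ := (hkp.sub hGp).abs
  have hGη' : ∫ x, |k (p x) - G (p x)| ∂μ ≤ η := by
    rwa [integral_map hp.aemeasurable (by fun_prop)] at hGη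
  have hφkp : Integrable (fun x => negMulLog (k (p x))) μ := Integrable.of_bound
    (Real.continuous_negMulLog.measurable.comp (hkm.comp hp)).aestronglyMeasurable 1
    (Eventually.of_forall fun x => by
      rw [Real.norm_eq_abs, abs_of_nonneg (Real.negMulLog_nonneg (hk01 _).1 (hk01 _).2)]
      exact negMulLog_le_one (hk01 _).1)
  rw [Metric.uniformContinuous_iff] at hGu
  obtain ⟨δ0, hδ0, hGδ⟩ := hGu η hηpos
  obtain ⟨n0, hn0⟩ := (Metric.tendsto_atTop.1 hδ) δ0 hδ0
  refine ⟨n0, fun n hn => ?_⟩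
  have hδn : δ n < δ0 := by
    have := hn0 n hn
    rw [Real.dist_eq, sub_zero] at this
    exact (le_abs_self _).trans_lt this
  have hq : Measurable (B n ∘ p) := (hB n).comp hp
  -- the estimate on each slice
  have hslice : ∀ y, |dens μ (B n ∘ p) y *
      negMulLog (dens (μ.restrict P) (B n ∘ p) y / dens μ (B n ∘ p) y)
        - ∫ x in (B n ∘ p) ⁻¹' Metric.ball y 1, negMulLog (k (p x)) ∂μ|
      ≤ (ε0 / (4 * v) + 2 * C * η) * dens μ (B n ∘ p) y
        + 2 * C * ∫ x in (B n ∘ p) ⁻¹' Metric.ball y 1, |k (p x) - G (p x)| ∂μ := by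
    intro y
    rw [dens_restrict_eq μ hp hP hk (hB n) y]
    have hreal : dens μ (B n ∘ p) y
        = (μ.restrict ((B n ∘ p) ⁻¹' Metric.ball y 1)).real univ := by
      simp [dens]
    rw [hreal]
    have hc : ∃ c, ∀ᵐ x ∂(μ.restrict ((B n ∘ p) ⁻¹' Metric.ball y 1)), |G (p x) - c| ≤ η := by
      rcases ((B n ∘ p) ⁻¹' Metric.ball y 1).eq_empty_or_nonempty with h | ⟨x0, hx0⟩
      · rw [h]; exact ⟨0, by simp⟩
      · refine ⟨G (p x0), ?_⟩
        rw [ae_restrict_iff' (hq measurableSet_ball)]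
        refine Eventually.of_forall fun x hx => ?_
        have hx' : dist (B n (p x)) y < 1 := hx
        have hx0' : dist (B n (p x0)) y < 1 := hx0
        have h2 : dist (B n (p x)) (B n (p x0)) < 2 := by
          linarith [dist_triangle_right (B n (p x)) (B n (p x0)) y]
        have := hGδ ((hBδ n _ _ h2).trans_lt hδn)
        rw [Real.dist_eq] at this
        exact this.le
    obtain ⟨c, hc⟩ := hc
    exact slice_estimate _ (hkm.comp hp) (fun x => hk01 _) hGp.integrableOn hc hC hφ
  obtain ⟨hi1, he1⟩ := smoothing μ hq hφkp
  obtain ⟨hi2, he2⟩ := smoothing μ hq hkG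
  rw [Real.dist_eq, ← he1, ← integral_sub (integrable_condTerm μ hq P) hi1]
  calc _ ≤ ∫ y, |dens μ (B n ∘ p) y *
      negMulLog (dens (μ.restrict P) (B n ∘ p) y / dens μ (B n ∘ p) y)
        - ∫ x in (B n ∘ p) ⁻¹' Metric.ball y 1, negMulLog (k (p x)) ∂μ| :=
        abs_integral_le_integral_abs
    _ ≤ ∫ y, ((ε0 / (4 * v) + 2 * C * η) * dens μ (B n ∘ p) y
        + 2 * C * ∫ x in (B n ∘ p) ⁻¹' Metric.ball y 1, |k (p x) - G (p x)| ∂μ) :=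
        integral_mono ((integrable_condTerm μ hq P).sub hi1).abs
          (((integrable_dens μ hq).const_mul _).add (hi2.const_mul _)) hslice
    _ = (ε0 / (4 * v) + 2 * C * η) * v + 2 * C * (v * ∫ x, |k (p x) - G (p x)| ∂μ) := by
        rw [integral_add ((integrable_dens μ hq).const_mul _) (hi2.const_mul _),
          integral_const_mul, integral_const_mul, he2, integral_dens μ hq]
    _ ≤ (ε0 / (4 * v) + 2 * C * η) * v + 2 * C * (v * η) := by gcongr
    _ = ε0 / 4 + 4 * C * v * η := by field_simp; ring
    _ < ε0 := by
        have : 4 * C * v * η ≤ ε0 / 2 := by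
          have : 4 * (C + 1) * v * η = ε0 / 2 := by rw [hη]; field_simp; ring
          have h3 : 0 ≤ v * η := by positivity
          nlinarith
        linarith

/-- Integrating `-log` of the conditional probability of `P` over `P` gives the integral of
`negMulLog` of that conditional probability, which is the form the limit theorem uses. -/
lemma setIntegral_neg_log_condExp {Ω : Type*} {m m0 : MeasurableSpace Ω} (hm : m ≤ m0)
    (μ : Measure Ω) [IsProbabilityMeasure μ] {P : Set Ω} (hP : MeasurableSet P) :
    ∫ x in P, -Real.log ((μ[P.indicator (fun _ => (1 : ℝ)) | m]) x) ∂μ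
      = ∫ x, negMulLog ((μ[P.indicator (fun _ => (1 : ℝ)) | m]) x) ∂μ := by
  set e := μ[P.indicator (fun _ => (1 : ℝ)) | m] with he
  have hint : Integrable (P.indicator (fun _ => (1 : ℝ))) μ :=
    (integrable_const (1 : ℝ)).indicator hP
  have hem : Measurable[m] e := stronglyMeasurable_condExp.measurable
  have hem0 : Measurable e := hem.mono hm le_rfl
  have h0 : ∀ᵐ x ∂μ, 0 ≤ e x :=
    condExp_nonneg (Eventually.of_forall fun x => indicator_nonneg (fun _ _ => zero_le_one) x)
  have h1 : ∀ᵐ x ∂μ, e x ≤ 1 := by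
    have := condExp_mono (m := m) hint (integrable_const (1 : ℝ))
        (Eventually.of_forall fun x => indicator_le_self' (fun _ _ => zero_le_one) x)
    rw [condExp_const hm] at this
    exact this
  -- on `m`, the measure `μ.restrict P` has density `e`
  have htrim : (μ.restrict P).trim hm = (μ.withDensity fun x => ENNReal.ofReal (e x)).trim hm := by
    refine @Measure.ext _ m _ _ fun s hs => ?_
    rw [trim_measurableSet_eq hm hs, trim_measurableSet_eq hm hs,
      withDensity_apply _ (hm s hs), Measure.restrict_apply (hm s hs),
      ← ofReal_integral_eq_lintegral_ofReal integrable_condExp.integrableOn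
        (ae_restrict_of_ae h0), setIntegral_condExp hm hint hs, setIntegral_indicator hP,
      setIntegral_const]
    simp [Measure.real]
  have hF : Measurable[m] fun x => ENNReal.ofReal (-Real.log (e x)) :=
    ENNReal.measurable_ofReal.comp (Real.measurable_log.comp hem).neg
  have key : ∫⁻ x in P, ENNReal.ofReal (-Real.log (e x)) ∂μ
      = ∫⁻ x, ENNReal.ofReal (negMulLog (e x)) ∂μ := by
    rw [← lintegral_trim hm hF, htrim, lintegral_trim hm hF,
      lintegral_withDensity_eq_lintegral_mul _ hem0.ennreal_ofReal (hF.mono hm le_rfl)]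
    refine lintegral_congr_ae ?_
    filter_upwards [h0] with x hx
    simp only [Pi.mul_apply]
    rw [← ENNReal.ofReal_mul hx, negMulLog]
    congr 1; ring
  rw [integral_eq_lintegral_of_nonneg_ae, integral_eq_lintegral_of_nonneg_ae, key]
  · filter_upwards [h0, h1] with x hx0 hx1 using Real.negMulLog_nonneg hx0 hx1
  · exact (Real.continuous_negMulLog.measurable.comp hem0).aestronglyMeasurable
  · filter_upwards [ae_restrict_of_ae h0, ae_restrict_of_ae h1] with x hx0 hx1
    simpa using Real.log_nonpos hx0 hx1
  · exact (Real.measurable_log.comp hem0).neg.aestronglyMeasurable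

/-! ### Entropy of the smoothed density and projection entropy -/

lemma measurableSet_cylP {l : ℕ} (j : Fin l) : MeasurableSet (cylP j : Set (Sig l)) := by
  have h : Measurable fun x : Sig l => x 0 := measurable_pi_apply 0
  exact h (measurableSet_singleton j)

/-- The differential entropy of the smoothed density of `q`. That density has total mass
`ballVol d` rather than `1`, so this is not normalized. -/
def smoothEnt {Ω : Type*} [MeasurableSpace Ω] {d : ℕ} (μ : Measure Ω) (q : Ω → Eu d) : ℝ :=
  ∫ y, negMulLog (dens μ q y)

section

variable {Ω : Type*} [MeasurableSpace Ω] {d : ℕ}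

lemma dens_eq_zero (μ : Measure Ω) {q : Ω → Eu d} {y : Eu d} (h : ∀ x, 1 ≤ dist (q x) y) :
    dens μ q y = 0 := by
  have : q ⁻¹' Metric.ball y 1 = ∅ := by
    ext x
    simpa using h x
  simp [dens, this]

lemma integrable_negMulLog_dens (μ : Measure Ω) [IsFiniteMeasure μ] (hμ : μ univ ≤ 1)
    {q : Ω → Eu d} (hq : Measurable q) {R : ℝ} (hR : ∀ x, ‖q x‖ ≤ R) :
    Integrable (fun y => negMulLog (dens μ q y)) volume := by
  have hball : Integrable ((Metric.ball (0 : Eu d) (R + 1)).indicator fun _ => (1 : ℝ)) volume :=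
    (integrable_indicator_iff measurableSet_ball).2
      (integrableOn_const measure_ball_lt_top.ne)
  refine hball.mono' (Real.continuous_negMulLog.measurable.comp
    (measurable_dens μ hq)).aestronglyMeasurable (Eventually.of_forall fun y => ?_)
  by_cases hy : y ∈ Metric.ball (0 : Eu d) (R + 1)
  · rw [indicator_of_mem hy]
    have h0 := dens_nonneg μ q y
    have h1 : dens μ q y ≤ 1 := by
      unfold dens Measure.real
      exact ENNReal.toReal_le_of_le_ofReal zero_le_one
        (by simpa using (measure_mono (subset_univ _)).trans hμ)
    rw [Real.norm_eq_abs, abs_of_nonneg (Real.negMulLog_nonneg h0 h1)]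
    exact negMulLog_le_one h0
  · rw [indicator_of_notMem hy, dens_eq_zero]
    · simp
    · intro x
      rw [Metric.mem_ball, dist_zero_right, not_lt] at hy
      have h1 := norm_sub_norm_le y (q x)
      rw [dist_comm, dist_eq_norm]
      linarith [hR x]

lemma dens_eq_sum {l : ℕ} (μ : Measure (Sig l)) [IsFiniteMeasure μ]
    {q : Sig l → Eu d} (hq : Measurable q) (y : Eu d) :
    dens μ q y = ∑ j, dens (μ.restrict (cylP j)) q y := by
  have hS : MeasurableSet (q ⁻¹' Metric.ball y 1) := hq measurableSet_ball
  have hU : q ⁻¹' Metric.ball y 1 = ⋃ j : Fin l, (q ⁻¹' Metric.ball y 1) ∩ cylP j := by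
    ext x; simp [cylP]
  unfold dens
  conv_lhs => rw [hU]
  rw [measureReal_iUnion_fintype]
  · simp only [measureReal_restrict_apply hS]
  · intro i j hij
    refine Set.disjoint_left.2 fun x hx hx' => hij ?_
    exact hx.2.symm.trans hx'.2
  · exact fun j => hS.inter (measurableSet_cylP j)

/-- Pointwise chain rule for entropy: refining the slice at `y` by the first digit adds the
entropy of the digit on that slice. -/
lemma sum_negMulLog_restrict {l : ℕ} (μ : Measure (Sig l)) [IsFiniteMeasure μ]
    {q : Sig l → Eu d} (hq : Measurable q) (y : Eu d) :
    ∑ j, negMulLog (dens (μ.restrict (cylP j)) q y) = negMulLog (dens μ q y)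
      + ∑ j, dens μ q y * negMulLog (dens (μ.restrict (cylP j)) q y / dens μ q y) := by
  have hsum := dens_eq_sum μ hq y
  set ρ := dens μ q y with hρ
  rcases eq_or_ne ρ 0 with h0 | h0
  · have : ∀ j, dens (μ.restrict (cylP j)) q y = 0 := fun j =>
      le_antisymm (h0 ▸ dens_restrict_le μ q (cylP j) y) (dens_nonneg _ _ _)
    simp [this, h0]
  · have hj : ∀ j, negMulLog (dens (μ.restrict (cylP j)) q y)
        = (dens (μ.restrict (cylP j)) q y / ρ) * negMulLog ρ
          + ρ * negMulLog (dens (μ.restrict (cylP j)) q y / ρ) := by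
      intro j
      rw [← Real.negMulLog_mul, mul_div_cancel₀ _ h0]
    simp only [hj]
    rw [Finset.sum_add_distrib, ← Finset.sum_mul, ← Finset.sum_div, ← hsum, div_self h0, one_mul]

lemma sum_integral_negMulLog_restrict {l : ℕ} (μ : Measure (Sig l)) [IsProbabilityMeasure μ]
    {q : Sig l → Eu d} (hq : Measurable q) {R : ℝ} (hR : ∀ x, ‖q x‖ ≤ R) :
    ∑ j, ∫ y, negMulLog (dens (μ.restrict (cylP j)) q y) = smoothEnt μ q
      + ∑ j, ∫ y, dens μ q y *
        negMulLog (dens (μ.restrict (cylP j)) q y / dens μ q y) := by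
  have hi : ∀ j : Fin l, Integrable (fun y => negMulLog (dens (μ.restrict (cylP j)) q y)) volume :=
    fun j => integrable_negMulLog_dens _ ((Measure.restrict_apply_le _ _).trans_eq measure_univ)
      hq hR
  rw [← integral_finsetSum _ fun j _ => hi j]
  simp only [sum_negMulLog_restrict μ hq]
  rw [integral_add (integrable_negMulLog_dens μ measure_univ.le hq hR)
    (integrable_finsetSum _ fun j _ => integrable_condTerm μ hq _),
    integral_finsetSum _ fun j _ => integrable_condTerm μ hq _]
  rfl

/-- Entropy is at most the logarithm of the volume of the support (up to the additive `1` and the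
factor `ballVol d` coming from the missing normalization). -/
lemma smoothEnt_le (μ : Measure Ω) [IsProbabilityMeasure μ] {q : Ω → Eu d} (hq : Measurable q)
    {R : ℝ} (hR : ∀ x, ‖q x‖ ≤ R) {S : Set (Eu d)} (hS : MeasurableSet S) {W : ℝ} (hW : 0 < W)
    (hSW : volume S ≤ ENNReal.ofReal W) (hqS : ∀ x y, dist (q x) y < 1 → y ∈ S) :
    smoothEnt μ q ≤ ballVol d * Real.log W + 1 := by
  have hSi : Integrable (S.indicator fun _ => (1 / W : ℝ)) volume :=
    (integrable_indicator_iff hS).2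
      (integrableOn_const (hSW.trans_lt ENNReal.ofReal_lt_top).ne)
  have hd := integrable_dens μ hq
  have hpt : ∀ y, negMulLog (dens μ q y) ≤
      dens μ q y * (Real.log W - 1) + S.indicator (fun _ => (1 / W : ℝ)) y := by
    intro y
    rcases eq_or_ne (dens μ q y) 0 with h0 | h0
    · rw [h0]
      simpa using indicator_nonneg (fun _ _ => by positivity) y
    · have hyS : y ∈ S := by
        by_contra hy
        refine h0 (dens_eq_zero μ fun x => ?_)
        by_contra hx
        exact hy (hqS x y (not_le.1 hx))
      rw [indicator_of_mem hyS]
      have h := Real.negMulLog_le_one_sub_self (mul_nonneg (dens_nonneg μ q y) hW.le)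
      rw [Real.negMulLog_mul] at h
      have h2 : negMulLog (dens μ q y) = (W * negMulLog (dens μ q y)) / W := by field_simp
      have h3 : W * negMulLog (dens μ q y)
          ≤ (dens μ q y * (Real.log W - 1) + 1 / W) * W := by
        have : (dens μ q y * (Real.log W - 1) + 1 / W) * W
          = 1 - dens μ q y * W + dens μ q y * (W * Real.log W) := by field_simp; ring
        rw [this]
        have h4 : negMulLog W = - (W * Real.log W) := by rw [negMulLog]; ring
        rw [h4] at h
        linarith
      rw [h2, div_le_iff₀ hW]
      exact h3
  calc smoothEnt μ q ≤ ∫ y, (dens μ q y * (Real.log W - 1)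
        + S.indicator (fun _ => (1 / W : ℝ)) y) :=
        integral_mono (integrable_negMulLog_dens μ measure_univ.le hq hR)
          ((hd.mul_const _).add hSi) hpt
    _ = ballVol d * (Real.log W - 1) + volume.real S * (1 / W) := by
        rw [integral_add (hd.mul_const _) hSi, integral_mul_const, integral_dens μ hq,
          integral_indicator hS, setIntegral_const, smul_eq_mul]
    _ ≤ ballVol d * Real.log W + 1 := by
        have h1 : volume.real S * (1 / W) ≤ 1 := by
          rw [mul_one_div, div_le_one hW]
          exact ENNReal.toReal_le_of_le_ofReal hW.le hSW
        have := ballVol_pos d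
        linarith

/-- A density bounded by `D` has entropy at least `-log D` (times its total mass). -/
lemma le_smoothEnt (μ : Measure Ω) [IsProbabilityMeasure μ] {q : Ω → Eu d} (hq : Measurable q)
    {R : ℝ} (hR : ∀ x, ‖q x‖ ≤ R) {D : ℝ} (hD : ∀ y, dens μ q y ≤ D) :
    ballVol d * -Real.log D ≤ smoothEnt μ q := by
  rw [← integral_dens μ hq, ← integral_mul_const]
  refine integral_mono ((integrable_dens μ hq).mul_const _)
    (integrable_negMulLog_dens μ measure_univ.le hq hR) fun y => ?_
  rcases (dens_nonneg μ q y).eq_or_lt with h0 | h0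
  · simp [← h0]
  · have := Real.log_le_log h0 (hD y)
    simp only [negMulLog]
    nlinarith

end

/-- The data of an affine system with common invertible linear part, reduced to what the
argument uses: the contraction `e`, the translations `c`, and a measurable bounded coding map `π`
satisfying `π x = e (π (shift x)) + c (x 0)`. -/
structure AffineCoding (d l : ℕ) where
  e : Eu d ≃L[ℝ] Eu d
  norm_lt : ‖(e : Eu d →L[ℝ] Eu d)‖ < 1
  c : Fin l → Eu d
  π : Sig l → Eu d
  measurable_π : Measurable π
  R : ℝ
  norm_le : ∀ x, ‖π x‖ ≤ R
  π_eq : ∀ x, π x = e (π (shift x)) + c (x 0)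

lemma measurable_shift {l : ℕ} : Measurable (shift : Sig l → Sig l) :=
  measurable_pi_lambda _ fun n => measurable_pi_apply (n + 1)

namespace AffineCoding

variable {d l : ℕ} (s : AffineCoding d l)

/-- The expanding map `A⁻ⁿ`, where `A = s.e`. -/
def B (n : ℕ) : Eu d →L[ℝ] Eu d := (s.e.symm : Eu d →L[ℝ] Eu d) ^ n

/-- The rescaled coding map `A⁻ⁿ ∘ π`. -/
def q (n : ℕ) : Sig l → Eu d := fun x => s.B n (s.π x)

lemma measurable_q (n : ℕ) : Measurable (s.q n) :=
  (s.B n).continuous.measurable.comp s.measurable_π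

lemma B_succ_e (n : ℕ) (z : Eu d) : s.B (n + 1) (s.e z) = s.B n z := by
  simp [B, pow_succ]

lemma norm_q_le (n : ℕ) (x : Sig l) : ‖s.q n x‖ ≤ ‖s.B n‖ * s.R :=
  (s.B n).le_of_opNorm_le_of_le le_rfl (s.norm_le x)

lemma q_succ (n : ℕ) (x : Sig l) :
    s.q (n + 1) x = s.q n (shift x) + s.B (n + 1) (s.c (x 0)) := by
  simp only [q]
  rw [s.π_eq x, map_add, B_succ_e]

lemma pow_B (n : ℕ) (z : Eu d) : ((s.e : Eu d →L[ℝ] Eu d) ^ n) (s.B n z) = z := by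
  induction n generalizing z with
  | zero => simp [B]
  | succ n ih =>
    have : s.B (n + 1) z = s.e.symm (s.B n z) := by simp [B, pow_succ']
    rw [this, pow_succ]
    simpa using ih z

lemma B_pow (n : ℕ) (z : Eu d) : s.B n (((s.e : Eu d →L[ℝ] Eu d) ^ n) z) = z := by
  induction n generalizing z with
  | zero => simp [B]
  | succ n ih =>
    rw [pow_succ']
    simpa [B_succ_e] using ih z

lemma dist_le_of_dist_B (n : ℕ) (z z' : Eu d) (h : dist (s.B n z) (s.B n z') < 2) :
    dist z z' ≤ ‖(s.e : Eu d →L[ℝ] Eu d)‖ ^ n * 2 := by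
  have hz : z - z' = ((s.e : Eu d →L[ℝ] Eu d) ^ n) (s.B n z - s.B n z') := by
    rw [map_sub, pow_B, pow_B]
  rw [dist_eq_norm] at h
  rw [dist_eq_norm, hz]
  calc _ ≤ ‖(s.e : Eu d →L[ℝ] Eu d) ^ n‖ * ‖s.B n z - s.B n z'‖ :=
        ContinuousLinearMap.le_opNorm _ _
    _ ≤ _ := by
      gcongr
      rcases n with _ | n
      · rw [pow_zero, pow_zero]
        exact ContinuousLinearMap.norm_id_le
      · exact norm_pow_le' _ (Nat.succ_pos n)

lemma dist_B_le_of_le {k n : ℕ} (hkn : k ≤ n) (z z' : Eu d) :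
    dist (s.B k z) (s.B k z') ≤ dist (s.B n z) (s.B n z') := by
  induction n, hkn using Nat.le_induction with
  | base => exact le_rfl
  | succ n _ ih =>
    refine ih.trans ?_
    have : ∀ z, s.B n z = s.e (s.B (n + 1) z) := fun z => by simp [B, pow_succ']
    rw [this, this, dist_eq_norm, dist_eq_norm, ← map_sub]
    calc _ ≤ ‖(s.e : Eu d →L[ℝ] Eu d)‖ * ‖s.B (n + 1) z - s.B (n + 1) z'‖ :=
          (s.e : Eu d →L[ℝ] Eu d).le_opNorm _
      _ ≤ _ := mul_le_of_le_one_left (norm_nonneg _) s.norm_lt.le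

/-- On the cylinder `[j]`, the slices of `q (n + 1)` are translates of the slices of
`q n ∘ shift`. This is where the equality of the linear parts enters. -/
lemma near_shift_iff (n : ℕ) (j : Fin l) (y : Eu d) :
    s.q (n + 1) ⁻¹' Metric.ball y 1 ∩ cylP j
      = (s.q n ∘ shift) ⁻¹' Metric.ball (y - s.B (n + 1) (s.c j)) 1 ∩ cylP j := by
  ext x
  simp only [mem_inter_iff, mem_preimage, Metric.mem_ball, Function.comp_apply]
  refine and_congr_left fun hx => ?_
  have hx0 : x 0 = j := hx
  rw [s.q_succ, hx0, dist_eq_norm, dist_eq_norm]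
  congr! 2
  abel

lemma dens_cyl_succ (μ : Measure (Sig l)) (n : ℕ) (j : Fin l) (y : Eu d) :
    dens (μ.restrict (cylP j)) (s.q (n + 1)) y
      = dens (μ.restrict (cylP j)) (s.q n ∘ shift) (y - s.B (n + 1) (s.c j)) := by
  unfold dens
  rw [measureReal_restrict_apply' (measurableSet_cylP j),
    measureReal_restrict_apply' (measurableSet_cylP j), near_shift_iff]

lemma dens_shift (μ : Measure (Sig l)) (n : ℕ) (y : Eu d) :
    dens μ (s.q n ∘ shift) y = dens (μ.map shift) (s.q n) y := by
  unfold dens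
  rw [map_measureReal_apply measurable_shift (s.measurable_q n measurableSet_ball)]
  rfl

/-- The entropy of the joint law of the first digit and the position, computed at scale `n + 1`
through `q (n + 1)` and at scale `n` through `q n ∘ shift`; both agree by `near_shift_iff` and
translation invariance of Lebesgue measure. -/
lemma smoothEnt_succ (μ : Measure (Sig l)) [IsProbabilityMeasure μ] (hμ : μ.map shift = μ)
    (n : ℕ) :
    smoothEnt μ (s.q (n + 1)) + ∑ j, ∫ y, dens μ (s.q (n + 1)) y *
        negMulLog (dens (μ.restrict (cylP j)) (s.q (n + 1)) y / dens μ (s.q (n + 1)) y)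
      = smoothEnt μ (s.q n) + ∑ j, ∫ y, dens μ (s.q n ∘ shift) y *
        negMulLog (dens (μ.restrict (cylP j)) (s.q n ∘ shift) y / dens μ (s.q n ∘ shift) y) := by
  rw [← sum_integral_negMulLog_restrict μ (s.measurable_q (n + 1)) (s.norm_q_le (n + 1))]
  have h1 : smoothEnt μ (s.q n) = smoothEnt μ (s.q n ∘ shift) := by
    unfold smoothEnt
    simp only [dens_shift, hμ]
  rw [h1, ← sum_integral_negMulLog_restrict μ ((s.measurable_q n).comp measurable_shift)
    (fun x => s.norm_q_le n (shift x))]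
  refine Finset.sum_congr rfl fun j _ => ?_
  simp only [dens_cyl_succ]
  exact integral_sub_right_eq_self
    (fun y => negMulLog (dens (μ.restrict (cylP j)) (s.q n ∘ shift) y)) _

lemma tendsto_delta :
    Tendsto (fun n => ‖(s.e : Eu d →L[ℝ] Eu d)‖ ^ n * 2) atTop (𝓝 0) := by
  simpa using (tendsto_pow_atTop_nhds_zero_of_lt_one (norm_nonneg _) s.norm_lt).mul_const 2

lemma condEntropyPart_eq (μ : Measure (Sig l)) [IsProbabilityMeasure μ] {p : Sig l → Eu d}
    (hp : Measurable p) :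
    condEntropyPart μ cylP (MeasurableSpace.comap p inferInstance) = ∑ j : Fin l, ∫ x,
      negMulLog ((μ[(cylP j).indicator (fun _ => (1 : ℝ)) |
        MeasurableSpace.comap p inferInstance]) x) ∂μ := by
  unfold condEntropyPart
  exact Finset.sum_congr rfl fun j _ =>
    setIntegral_neg_log_condExp hp.comap_le μ (measurableSet_cylP j)

lemma condEntropyPart_mem (μ : Measure (Sig l)) [IsProbabilityMeasure μ] {p : Sig l → Eu d}
    (hp : Measurable p) :
    condEntropyPart μ cylP (MeasurableSpace.comap p inferInstance) ∈ Icc (0 : ℝ) l := by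
  rw [condEntropyPart_eq μ hp]
  have : ∀ j : Fin l, ∫ x, negMulLog ((μ[(cylP j).indicator (fun _ => (1 : ℝ)) |
        MeasurableSpace.comap p inferInstance]) x) ∂μ ∈ Icc (0 : ℝ) 1 := by
    intro j
    obtain ⟨k, hkm, hk01, hk⟩ := exists_condProb_version μ hp (measurableSet_cylP j)
    have hint : ∫ x, negMulLog ((μ[(cylP j).indicator (fun _ => (1 : ℝ)) |
        MeasurableSpace.comap p inferInstance]) x) ∂μ = ∫ x, negMulLog ((k ∘ p) x) ∂μ :=
      integral_congr_ae (hk.fun_comp negMulLog)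
    rw [hint]
    have h0 : ∀ x, 0 ≤ negMulLog ((k ∘ p) x) := fun x =>
      Real.negMulLog_nonneg (hk01 _).1 (hk01 _).2
    refine ⟨integral_nonneg h0, ?_⟩
    have := integral_mono_of_nonneg (μ := μ) (Eventually.of_forall h0) (integrable_const (1 : ℝ))
      (Eventually.of_forall fun x => negMulLog_le_one (hk01 (p x)).1)
    simpa using this
  refine ⟨Finset.sum_nonneg fun j _ => (this j).1, ?_⟩
  calc _ ≤ ∑ j : Fin l, (1 : ℝ) := Finset.sum_le_sum fun j _ => (this j).2
    _ = l := by simp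

lemma projEntropy_le (μ : Measure (Sig l)) [IsProbabilityMeasure μ] :
    projEntropy s.π μ ≤ l := by
  have h1 := condEntropyPart_mem μ (s.measurable_π.comp measurable_shift)
  have h2 := condEntropyPart_mem μ s.measurable_π
  have : projEntropy s.π μ
    = condEntropyPart μ cylP (MeasurableSpace.comap (s.π ∘ shift) inferInstance)
      - condEntropyPart μ cylP (MeasurableSpace.comap s.π inferInstance) := rfl
  rw [this]
  linarith [h1.2, h2.1]

/-- The smoothed entropy at scale `n` grows linearly, at the rate of the projection entropy: its
increments converge by `smoothEnt_succ` and `tendsto_condTerm`, and one takes a Cesàro mean. -/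
theorem tendsto_smoothEnt_div (μ : Measure (Sig l)) [IsProbabilityMeasure μ]
    (hμ : μ.map shift = μ) :
    Tendsto (fun n : ℕ => smoothEnt μ (s.q n) / n) atTop
      (𝓝 (ballVol d * projEntropy s.π μ)) := by
  have hB : ∀ n, Measurable (s.B n) := fun n => (s.B n).continuous.measurable
  have hT1 := tendsto_finsetSum Finset.univ fun (j : Fin l) _ =>
    tendsto_condTerm μ s.measurable_π (measurableSet_cylP j) (B := fun n => s.B n) hB
      s.tendsto_delta s.dist_le_of_dist_B
  have hT2 := tendsto_finsetSum Finset.univ fun (j : Fin l) _ =>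
    tendsto_condTerm μ (s.measurable_π.comp measurable_shift) (measurableSet_cylP j)
      (B := fun n => s.B n) hB s.tendsto_delta s.dist_le_of_dist_B
  rw [← Finset.mul_sum, ← condEntropyPart_eq μ s.measurable_π] at hT1
  rw [← Finset.mul_sum, ← condEntropyPart_eq μ (s.measurable_π.comp measurable_shift)] at hT2
  have hdiff : Tendsto (fun n => smoothEnt μ (s.q (n + 1)) - smoothEnt μ (s.q n)) atTop
      (𝓝 (ballVol d * projEntropy s.π μ)) := by
    have := hT2.sub (hT1.comp (tendsto_add_atTop_nat 1))
    rw [← mul_sub] at this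
    refine this.congr fun n => ?_
    have h := s.smoothEnt_succ μ hμ n
    simp only [Function.comp_apply]
    change (∑ j, ∫ y, dens μ (s.q n ∘ shift) y *
        negMulLog (dens (μ.restrict (cylP j)) (s.q n ∘ shift) y / dens μ (s.q n ∘ shift) y))
      - (∑ j, ∫ y, dens μ (s.q (n + 1)) y *
        negMulLog (dens (μ.restrict (cylP j)) (s.q (n + 1)) y / dens μ (s.q (n + 1)) y)) = _
    linarith
  have hces := hdiff.cesaro
  have h0 : Tendsto (fun n : ℕ => smoothEnt μ (s.q 0) / n) atTop (𝓝 0) :=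
    tendsto_const_div_atTop_nhds_zero_nat _
  have := hces.add h0
  rw [add_zero] at this
  refine this.congr fun n => ?_
  rw [Finset.sum_range_sub (fun n => smoothEnt μ (s.q n))]
  ring

end AffineCoding

/-! ### Counting cells and separated words -/

/-- The lower corner of the cube indexed by `α`. -/
def vec {d : ℕ} (α : Fin d → ℤ) : Eu d := WithLp.toLp 2 fun i => (α i : ℝ)

lemma abs_coord_le_norm {d : ℕ} (x : Eu d) (i : Fin d) : |x i| ≤ ‖x‖ := by
  simpa using PiLp.norm_apply_le x i

lemma dist_vec_le {d : ℕ} {α : Fin d → ℤ} {x : Eu d} (hx : x ∈ cube d α) :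
    dist x (vec α) ≤ √d := by
  rw [EuclideanSpace.dist_eq]
  refine Real.sqrt_le_sqrt ?_
  calc ∑ i, dist (x i) ((vec α) i) ^ 2 ≤ ∑ _i : Fin d, (1 : ℝ) := by
        refine Finset.sum_le_sum fun i _ => ?_
        have h := hx i
        have h1 : dist (x i) ((vec α) i) ≤ 1 := by
          rw [Real.dist_eq, abs_le]
          simp only [vec]
          constructor <;> linarith
        exact pow_le_one₀ dist_nonneg h1
    _ = d := by simp

lemma exists_mem_cube {d : ℕ} (x : Eu d) : ∃ α, x ∈ cube d α :=
  ⟨fun i => ⌊x i⌋, fun _ => ⟨Int.floor_le _, Int.lt_floor_add_one _⟩⟩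

/-- Distinct lattice points congruent modulo `L` are at distance at least `L`. -/
lemma le_dist_vec {d L : ℕ} {α β : Fin d → ℤ} (hne : α ≠ β)
    (hmod : (fun i => (α i : ZMod L)) = fun i => (β i : ZMod L)) :
    (L : ℝ) ≤ dist (vec α) (vec β) := by
  obtain ⟨i, hi⟩ := Function.ne_iff.1 hne
  have h1 : (L : ℤ) ∣ α i - β i :=
    (ZMod.intCast_eq_intCast_iff_dvd_sub _ _ L).1 (congrFun hmod i).symm
  have h2 : (L : ℤ) ≤ |α i - β i| :=
    Int.le_of_dvd (abs_pos.2 (sub_ne_zero.2 hi)) ((dvd_abs _ _).2 h1)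
  have h3 := abs_coord_le_norm (vec α - vec β) i
  rw [dist_eq_norm]
  refine le_trans ?_ h3
  have h4 : (vec α - vec β) i = ((α i - β i : ℤ) : ℝ) := by simp [vec]
  rw [h4, ← Int.cast_abs]
  exact_mod_cast h2

namespace AffineCoding

variable {d l : ℕ} (s : AffineCoding d l)

/-- The unit cubes met by `A⁻ⁿ K`, i.e. those `α` for which `Aⁿ Q_α` meets `K`. -/
def cells (n : ℕ) : Set (Fin d → ℤ) := {α | ∃ x, s.q n x ∈ cube d α}

lemma finite_cells (n : ℕ) : (s.cells n).Finite := by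
  set N : ℤ := ⌈‖s.B n‖ * s.R + 1⌉ with hN
  refine (Set.finite_Icc (fun _ : Fin d => -N) (fun _ => N)).subset ?_
  rintro α ⟨x, hx⟩
  have key : ∀ i, -N ≤ α i ∧ α i ≤ N := by
    intro i
    have h1 := abs_le.1 ((abs_coord_le_norm (s.q n x) i).trans (s.norm_q_le n x))
    have h2 := hx i
    have h3 := Int.le_ceil (‖s.B n‖ * s.R + 1)
    rw [← hN] at h3
    constructor
    · have : -(N : ℝ) ≤ α i := by linarith
      exact_mod_cast this
    · have : (α i : ℝ) ≤ N := by linarith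
      exact_mod_cast this
  exact ⟨fun i => (key i).1, fun i => (key i).2⟩

lemma ncard_cells_pos (x : Sig l) (n : ℕ) : 0 < (s.cells n).ncard := by
  rw [Set.ncard_pos (s.finite_cells n)]
  obtain ⟨α, hα⟩ := exists_mem_cube (s.q n x)
  exact ⟨α, x, hα⟩

/-- The volume of a ball of radius `√d + 1`; such a ball about the corner of a unit cube contains
the `1`-neighbourhood of that cube. -/
def cellVol (d : ℕ) : ℝ := volume.real (Metric.ball (0 : Eu d) (√d + 1))

lemma cellVol_pos (d : ℕ) : 0 < cellVol d := by
  unfold cellVol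
  rw [Measure.real, ENNReal.toReal_pos_iff]
  exact ⟨Metric.measure_ball_pos _ _ (by positivity), measure_ball_lt_top⟩

lemma smoothEnt_le_log_ncard (x : Sig l) (μ : Measure (Sig l)) [IsProbabilityMeasure μ] (n : ℕ) :
    smoothEnt μ (s.q n) ≤ ballVol d * Real.log ((s.cells n).ncard * cellVol d) + 1 := by
  have hpos : (0 : ℝ) < (s.cells n).ncard := by exact_mod_cast s.ncard_cells_pos x n
  refine smoothEnt_le μ (s.measurable_q n) (s.norm_q_le n)
    (S := ⋃ α ∈ (s.finite_cells n).toFinset, Metric.ball (vec α) (√d + 1))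
    (Finset.measurableSet_biUnion _ fun _ _ => measurableSet_ball)
    (mul_pos hpos (cellVol_pos d)) ?_ ?_
  · refine (measure_biUnion_finset_le _ _).trans ?_
    have : ∀ α : Fin d → ℤ, volume (Metric.ball (vec α) (√d + 1))
        = ENNReal.ofReal (cellVol d) := by
      intro α
      rw [cellVol, ofReal_measureReal measure_ball_lt_top.ne, Measure.addHaar_ball_center]
    simp only [this, Finset.sum_const, nsmul_eq_mul]
    rw [ENNReal.ofReal_mul hpos.le, ENNReal.ofReal_natCast,
      Set.ncard_eq_toFinset_card _ (s.finite_cells n)]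
  · intro z y hzy
    obtain ⟨α, hα⟩ := exists_mem_cube (s.q n z)
    simp only [mem_iUnion, Metric.mem_ball]
    refine ⟨α, (s.finite_cells n).mem_toFinset.2 ⟨z, hα⟩, ?_⟩
    have h1 := dist_triangle y (s.q n z) (vec α)
    have h2 := dist_vec_le hα
    rw [dist_comm] at hzy
    linarith

/-- Upper half of the variational principle: the projection entropy of an invariant measure is at
most the lower exponential growth rate of the number of cells. -/
theorem eventually_lt_log_ncard (x : Sig l) (μ : Measure (Sig l)) [IsProbabilityMeasure μ]
    (hμ : μ.map shift = μ) {r : ℝ} (hr : r < projEntropy s.π μ) :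
    ∀ᶠ n : ℕ in atTop, r < Real.log (s.cells n).ncard / n := by
  have hv := ballVol_pos d
  have h1 := (s.tendsto_smoothEnt_div μ hμ).div_const (ballVol d)
  rw [mul_div_cancel_left₀ _ hv.ne'] at h1
  have h2 := h1.sub
    (tendsto_const_div_atTop_nhds_zero_nat (Real.log (cellVol d) + 1 / ballVol d))
  rw [sub_zero] at h2
  filter_upwards [h2.eventually (lt_mem_nhds hr), eventually_gt_atTop 0] with n hn hn0
  refine hn.trans_le ?_
  have hn0' : (0 : ℝ) < n := by exact_mod_cast hn0
  have hpos : (0 : ℝ) < (s.cells n).ncard := by exact_mod_cast s.ncard_cells_pos x n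
  have h3 := s.smoothEnt_le_log_ncard x μ n
  rw [Real.log_mul hpos.ne' (cellVol_pos d).ne'] at h3
  rw [div_right_comm, ← sub_div]
  refine div_le_div_of_nonneg_right ?_ hn0'.le
  rw [sub_le_iff_le_add, div_le_iff₀ hv]
  have : 1 / ballVol d * ballVol d = 1 := by field_simp
  nlinarith

/-- If two points share their first `a` digits, then at scale `a + k` they differ exactly as their
`a`-th shifts do at scale `k`. -/
lemma q_add_sub (k : ℕ) : ∀ (a : ℕ) (x x' : Sig l), (∀ j < a, x j = x' j) →
    s.q (a + k) x - s.q (a + k) x' = s.q k (shift^[a] x) - s.q k (shift^[a] x') := by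
  intro a
  induction a with
  | zero => intro x x' _; simp
  | succ a ih =>
    intro x x' h
    have h0 : x 0 = x' 0 := h 0 (Nat.succ_pos a)
    rw [Function.iterate_succ_apply, Function.iterate_succ_apply,
      ← ih (shift x) (shift x') fun j hj => h (j + 1) (Nat.succ_lt_succ hj),
      show a + 1 + k = (a + k) + 1 by ring, s.q_succ, s.q_succ, h0]
    abel

lemma dist_q_le (k : ℕ) (x x' : Sig l) (h : ∀ j < k, x j = x' j) :
    dist (s.q k x) (s.q k x') ≤ 2 * s.R := by
  rw [dist_eq_norm, ← add_zero k, s.q_add_sub 0 k x x' (by simpa using h)]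
  have h0 : ∀ z, s.q 0 z = s.π z := fun z => by simp [q, B]
  rw [h0, h0, two_mul]
  refine (norm_sub_le _ _).trans ?_
  exact add_le_add (s.norm_le _) (s.norm_le _)

/-- A side length, independent of the scale, such that cells whose indices are congruent modulo it
are far apart compared with the diameter of the coded set. -/
def modulus : ℕ := ⌈4 * s.R + 2 * √d⌉₊ + 2

/-- Up to the factor `modulus ^ d`, the number of cells at scale `k` is at most the number of words of
length `k` (the first `k` digits of the `w i`) whose cylinders remain separated at scale `k`. They
are found by the pigeonhole principle on the cell indices modulo `modulus`. -/
lemma exists_separated_words (x₀ : Sig l) (k : ℕ) : ∃ (M : ℕ) (w : Fin M → Sig l), 0 < M ∧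
    ((s.cells k).ncard : ℝ) ≤ (s.modulus : ℝ) ^ d * M ∧
    ∀ i i' x x', (∀ j < k, x j = w i j) → (∀ j < k, x' j = w i' j) →
      dist (s.q k x) (s.q k x') < 2 → i = i' := by
  classical
  have : NeZero s.modulus := ⟨by simp [modulus]⟩
  set F := (s.finite_cells k).toFinset with hF
  have hcard : F.card = (s.cells k).ncard := (Set.ncard_eq_toFinset_card _ _).symm
  have hLpos : (0 : ℝ) < (s.modulus : ℝ) ^ d := by
    have : (0 : ℝ) < s.modulus := by simp [modulus]; positivity
    positivity
  obtain ⟨r, -, hr⟩ := Finset.exists_le_card_fiber_of_nsmul_le_card_of_maps_to (s := F)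
    (t := (Finset.univ : Finset (Fin d → ZMod s.modulus)))
    (f := fun α i => (α i : ZMod s.modulus))
    (b := (F.card : ℝ) / (s.modulus : ℝ) ^ d)
    (fun _ _ => Finset.mem_univ _) Finset.univ_nonempty (by
      rw [Finset.card_univ, Fintype.card_fun, ZMod.card, Fintype.card_fin, nsmul_eq_mul,
        Nat.cast_pow, mul_div_cancel₀ _ hLpos.ne'])
  set G := F.filter fun α => (fun i => (α i : ZMod s.modulus)) = r with hG
  have hGcell : ∀ α : G, ∃ x, s.q k x ∈ cube d α.1 := fun α =>
    (s.finite_cells k).mem_toFinset.1 (Finset.mem_filter.1 α.2).1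
  choose X hX using hGcell
  have hle : ((s.cells k).ncard : ℝ) ≤ (s.modulus : ℝ) ^ d * G.card := by
    rw [← hcard, mul_comm, ← div_le_iff₀ hLpos]
    exact hr
  refine ⟨G.card, fun i => X (G.equivFin.symm i), ?_, hle, ?_⟩
  · rcases Nat.eq_zero_or_pos G.card with h0 | h0
    · rw [h0] at hle
      have : (0 : ℝ) < (s.cells k).ncard := by exact_mod_cast s.ncard_cells_pos x₀ k
      rw [Nat.cast_zero, mul_zero] at hle
      linarith
    · exact h0
  · intro i i' x x' hx hx' hdist
    by_contra hne
    set α := G.equivFin.symm i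
    set α' := G.equivFin.symm i'
    have hαne : α.1 ≠ α'.1 := fun h => hne (G.equivFin.symm.injective (Subtype.ext h))
    have h1 := le_dist_vec hαne
      ((Finset.mem_filter.1 α.2).2.trans (Finset.mem_filter.1 α'.2).2.symm)
    have h2 := dist_vec_le (hX α)
    have h3 := dist_vec_le (hX α')
    have h4 := s.dist_q_le k x (X α) hx
    have h5 := s.dist_q_le k x' (X α') hx'
    have h6 : (4 * s.R + 2 * √d) + 2 ≤ s.modulus := by
      have := Nat.le_ceil (4 * s.R + 2 * √d)
      simp only [modulus, Nat.cast_add, Nat.cast_ofNat]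
      linarith
    have t1 := dist_triangle (vec α.1) (s.q k (X α)) (vec α'.1)
    have t2 := dist_triangle (s.q k (X α)) (s.q k x) (vec α'.1)
    have t3 := dist_triangle (s.q k x) (s.q k x') (vec α'.1)
    have t4 := dist_triangle (s.q k x') (s.q k (X α')) (vec α'.1)
    rw [dist_comm (vec α.1) (s.q k (X α))] at t1
    rw [dist_comm] at h4
    linarith

end AffineCoding

/-! ### Invariant measures from separated words -/

section Concat

variable {l M : ℕ}

/-- The sequence obtained by concatenating the words of length `k` given by the first `k` digits of
`w (β 0)`, `w (β 1)`, and so on. -/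
def concat (k : ℕ) (w : Fin M → Sig l) : Sig M → Sig l := fun β n => w (β (n / k)) (n % k)

lemma measurable_concat (k : ℕ) (w : Fin M → Sig l) : Measurable (concat k w) :=
  measurable_pi_lambda _ fun n =>
    (measurable_of_finite fun i : Fin M => w i (n % k)).comp (measurable_pi_apply (n / k))

lemma iterate_shift_apply (x : Sig l) (i n : ℕ) : shift^[i] x n = x (n + i) := by
  induction i generalizing n with
  | zero => rfl
  | succ i ih =>
    rw [Function.iterate_succ_apply']
    change shift^[i] x (n + 1) = _
    rw [ih]
    congr 1
    ring

lemma shift_concat {k : ℕ} (hk : 0 < k) (w : Fin M → Sig l) (i : ℕ) (β : Sig M) :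
    shift^[i * k] (concat k w β) = concat k w (shift^[i] β) := by
  funext n
  rw [iterate_shift_apply]
  simp only [concat, iterate_shift_apply]
  rw [Nat.add_mul_div_right _ _ hk, Nat.add_mul_mod_self_right]

lemma concat_apply_lt {k : ℕ} (w : Fin M → Sig l) (β : Sig M) {j : ℕ} (hj : j < k) :
    concat k w β j = w (β 0) j := by
  simp [concat, Nat.div_eq_of_lt hj, Nat.mod_eq_of_lt hj]

/-- The uniform Bernoulli measure on `M` symbols. -/
def bernoulli (M : ℕ) : Measure (Sig M) :=
  Measure.infinitePi fun _ => ProbabilityTheory.uniformOn univ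

instance [NeZero M] : IsProbabilityMeasure
    (ProbabilityTheory.uniformOn (univ : Set (Fin M))) :=
  ProbabilityTheory.isProbabilityMeasure_uniformOn finite_univ univ_nonempty

instance [NeZero M] : IsProbabilityMeasure (bernoulli M) := by
  unfold bernoulli; infer_instance

lemma map_shift_bernoulli [NeZero M] : (bernoulli M).map shift = bernoulli M := by
  refine Measure.eq_infinitePi _ fun S t ht => ?_
  rw [Measure.map_apply measurable_shift
    (MeasurableSet.pi S.countable_toSet fun i _ => ht i)]
  have : shift ⁻¹' (Set.pi (S : Set ℕ) t)
      = Set.pi ((S.map ⟨Nat.succ, Nat.succ_injective⟩ : Finset ℕ) : Set ℕ)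
        (fun n => t (n - 1)) := by
    ext x
    simp [shift, Set.mem_pi]
  rw [this, bernoulli, Measure.infinitePi_pi _ fun i _ => ht _]
  simp

lemma bernoulli_cylinder [NeZero M] (β : Sig M) (j : ℕ) :
    bernoulli M {x | ∀ i < j, x i = β i} = (M : ENNReal)⁻¹ ^ j := by
  have : {x : Sig M | ∀ i < j, x i = β i}
      = Set.pi ((Finset.range j : Finset ℕ) : Set ℕ) (fun i => {β i}) := by
    ext x
    simp [Set.mem_pi]
  rw [this, bernoulli, Measure.infinitePi_pi _ fun i _ => measurableSet_singleton _]
  have hM : ∀ i : Fin M, ProbabilityTheory.uniformOn (univ : Set (Fin M)) {i}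
      = (M : ENNReal)⁻¹ := by
    intro i
    rw [ProbabilityTheory.uniformOn_univ, Measure.count_singleton, Fintype.card_fin, one_div]
  simp [hM]

end Concat

section Average

variable {l : ℕ}

/-- The average of the first `k` push-forwards of `ν` by the shift; for a `shift^[k]`-invariant `ν`
it is shift-invariant. -/
def averaged (k : ℕ) (ν : Measure (Sig l)) : Measure (Sig l) :=
  (k : ENNReal)⁻¹ • ∑ i ∈ Finset.range k, ν.map shift^[i]

lemma averaged_apply (k : ℕ) (ν : Measure (Sig l)) (S : Set (Sig l)) :
    averaged k ν S = (k : ENNReal)⁻¹ * ∑ i ∈ Finset.range k, ν.map shift^[i] S := by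
  simp [averaged, Measure.finsetSum_apply]

lemma isProbabilityMeasure_averaged {k : ℕ} (hk : 0 < k) (ν : Measure (Sig l))
    [IsProbabilityMeasure ν] : IsProbabilityMeasure (averaged k ν) := by
  constructor
  rw [averaged_apply]
  have : ∀ i, ν.map shift^[i] univ = 1 := fun i => by
    rw [Measure.map_apply (measurable_shift.iterate i) MeasurableSet.univ]
    simp
  simp only [this, Finset.sum_const, Finset.card_range, nsmul_eq_mul, mul_one]
  exact ENNReal.inv_mul_cancel (by simp [hk.ne']) (by simp)

lemma map_shift_averaged {k : ℕ} (ν : Measure (Sig l))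
    [IsProbabilityMeasure ν] (hν : ν.map shift^[k] = ν) :
    (averaged k ν).map shift = averaged k ν := by
  ext S hS
  rw [Measure.map_apply measurable_shift hS, averaged_apply, averaged_apply]
  congr 1
  have h1 : ∀ i, ν.map shift^[i] (shift ⁻¹' S) = ν.map shift^[i + 1] S := by
    intro i
    rw [Measure.map_apply (measurable_shift.iterate i) (measurable_shift hS),
      Measure.map_apply (measurable_shift.iterate (i + 1)) hS, Function.iterate_succ',
      preimage_comp]
  simp only [h1]
  have h2 := Finset.sum_range_succ (fun i => ν.map shift^[i] S) k
  rw [Finset.sum_range_succ'] at h2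
  have h3 : ν.map shift^[k] S = ν.map shift^[0] S := by
    rw [hν, Function.iterate_zero, Measure.map_id]
  rw [h3] at h2
  refine (ENNReal.add_left_inj ?_).1 h2
  rw [Function.iterate_zero, Measure.map_id]
  exact measure_ne_top _ _

end Average

namespace AffineCoding

variable {d l : ℕ} (s : AffineCoding d l)

/-- Pushing a measure forward by the shift multiplies a bound on the smoothed densities by at most
`l`, one factor for each possible deleted digit. -/
lemma dens_map_shift_le (μ : Measure (Sig l)) [IsFiniteMeasure μ] (n : ℕ) {D : ℝ}
    (hD : ∀ y, dens μ (s.q (n + 1)) y ≤ D) (y : Eu d) :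
    dens (μ.map shift) (s.q n) y ≤ l * D := by
  rw [← dens_shift, dens_eq_sum μ ((s.measurable_q n).comp measurable_shift)]
  calc _ ≤ ∑ _j : Fin l, D := by
        refine Finset.sum_le_sum fun j _ => ?_
        have h := s.dens_cyl_succ μ n j (y + s.B (n + 1) (s.c j))
        rw [add_sub_cancel_right] at h
        rw [← h]
        exact (dens_restrict_le _ _ _ _).trans (hD _)
    _ = l * D := by simp

lemma dens_map_iterate_shift_le (μ : Measure (Sig l)) [IsProbabilityMeasure μ] {D : ℕ → ℝ}
    (hD : ∀ n y, dens μ (s.q n) y ≤ D n) (i n : ℕ) (y : Eu d) :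
    dens (μ.map shift^[i]) (s.q n) y ≤ (l : ℝ) ^ i * D (n + i) := by
  induction i generalizing n y with
  | zero => simpa using hD n y
  | succ i ih =>
    have : μ.map shift^[i + 1] = (μ.map shift^[i]).map shift := by
      rw [Measure.map_map measurable_shift (measurable_shift.iterate i),
        Function.iterate_succ']
    rw [this]
    have := Measure.isProbabilityMeasure_map (μ := μ)
      (measurable_shift (l := l).iterate i).aemeasurable
    refine (s.dens_map_shift_le _ n (ih (n + 1)) y).trans_eq ?_
    rw [pow_succ', mul_assoc, show n + 1 + i = n + (i + 1) by ring]

lemma dens_averaged_le (hl : 0 < l) {k : ℕ} (hk : 0 < k) (ν : Measure (Sig l))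
    [IsProbabilityMeasure ν] {D : ℕ → ℝ} (hD : ∀ n y, dens ν (s.q n) y ≤ D n)
    (hanti : Antitone D) (hD0 : ∀ n, 0 ≤ D n) (n : ℕ) (y : Eu d) :
    dens (averaged k ν) (s.q n) y ≤ (l : ℝ) ^ k * D n := by
  have hl1 : (1 : ℝ) ≤ l := by exact_mod_cast hl
  have h : ∀ i ∈ Finset.range k, ν.map shift^[i] (s.q n ⁻¹' Metric.ball y 1)
      ≤ ENNReal.ofReal ((l : ℝ) ^ k * D n) := by
    intro i hi
    have := Measure.isProbabilityMeasure_map (μ := ν)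
      (measurable_shift (l := l).iterate i).aemeasurable
    refine (ENNReal.le_ofReal_iff_toReal_le (measure_ne_top _ _)
      (mul_nonneg (by positivity) (hD0 n))).2 ?_
    refine (s.dens_map_iterate_shift_le ν hD i n y).trans ?_
    exact mul_le_mul (pow_le_pow_right₀ hl1 (Finset.mem_range.1 hi).le)
      (hanti (Nat.le_add_right n i)) (hD0 _) (by positivity)
  unfold dens Measure.real
  refine ENNReal.toReal_le_of_le_ofReal (mul_nonneg (by positivity) (hD0 n)) ?_
  rw [averaged_apply]
  refine (mul_le_mul_right (Finset.sum_le_sum h) _).trans_eq ?_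
  rw [Finset.sum_const, Finset.card_range, nsmul_eq_mul, ← mul_assoc,
    ENNReal.inv_mul_cancel (by simp [hk.ne']) (by simp), one_mul]

/-- Concatenations that are close at scale `n` have the same first `n / k` blocks: expansion makes
them close at scale `(a + 1) k` for each `a < n / k`, and once the first `a` blocks agree the
separation property identifies the next one. -/
lemma concat_agree {k M : ℕ} (hk : 0 < k) {w : Fin M → Sig l}
    (hw : ∀ i i' x x', (∀ j < k, x j = w i j) → (∀ j < k, x' j = w i' j) →
      dist (s.q k x) (s.q k x') < 2 → i = i')
    (n : ℕ) {β β' : Sig M} (h : dist (s.q n (concat k w β)) (s.q n (concat k w β')) < 2) :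
    ∀ a ≤ n / k, ∀ i < a, β i = β' i := by
  intro a
  induction a with
  | zero => intro _ i hi; exact absurd hi (Nat.not_lt_zero i)
  | succ a ih =>
    intro ha
    have ih := ih (Nat.le_of_succ_le ha)
    suffices β a = β' a by
      intro i hi
      rcases Nat.lt_succ_iff_lt_or_eq.1 hi with h1 | h1
      · exact ih i h1
      · rw [h1]; exact this
    have hle : a * k + k ≤ n := by
      have := (Nat.le_div_iff_mul_le hk).1 ha
      rwa [Nat.succ_mul] at this
    have h1 := (s.dist_B_le_of_le hle (s.π (concat k w β)) (s.π (concat k w β'))).trans_lt h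
    have hag : ∀ j < a * k, concat k w β j = concat k w β' j := by
      intro j hj
      simp only [concat]
      rw [ih (j / k) ((Nat.div_lt_iff_lt_mul hk).2 hj)]
    have h2 := s.q_add_sub k (a * k) _ _ hag
    rw [shift_concat hk, shift_concat hk] at h2
    have h3 : dist (s.q k (concat k w (shift^[a] β))) (s.q k (concat k w (shift^[a] β'))) < 2 := by
      rw [dist_eq_norm, ← h2, ← dist_eq_norm]
      exact h1
    have h4 := hw _ _ _ _ (fun j hj => concat_apply_lt w (shift^[a] β) hj)
      (fun j hj => concat_apply_lt w (shift^[a] β') hj) h3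
    simpa [iterate_shift_apply] using h4

lemma dens_concat_le {k M : ℕ} [NeZero M] (hk : 0 < k) {w : Fin M → Sig l}
    (hw : ∀ i i' x x', (∀ j < k, x j = w i j) → (∀ j < k, x' j = w i' j) →
      dist (s.q k x) (s.q k x') < 2 → i = i') (n : ℕ) (y : Eu d) :
    dens ((bernoulli M).map (concat k w)) (s.q n) y ≤ (M : ℝ)⁻¹ ^ (n / k) := by
  unfold dens
  rw [map_measureReal_apply (measurable_concat k w) (s.measurable_q n measurableSet_ball)]
  rcases (concat k w ⁻¹' (s.q n ⁻¹' Metric.ball y 1)).eq_empty_or_nonempty with h0 | ⟨β, hβ⟩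
  · rw [h0, measureReal_empty]
    positivity
  · have hsub : concat k w ⁻¹' (s.q n ⁻¹' Metric.ball y 1) ⊆ {x | ∀ i < n / k, x i = β i} := by
      intro x hx
      refine s.concat_agree hk hw n ?_ (n / k) le_rfl
      have h1 : dist (s.q n (concat k w x)) y < 1 := hx
      have h2 : dist (s.q n (concat k w β)) y < 1 := hβ
      have := dist_triangle_right (s.q n (concat k w x)) (s.q n (concat k w β)) y
      linarith
    refine (measureReal_mono hsub).trans_eq ?_
    rw [Measure.real, bernoulli_cylinder]
    simp

/-- `M` separated words of length `k` carry an invariant measure of projection entropy at least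
`log M / k`: the shift-average of the uniform Bernoulli measure on concatenations of these words.
Its smoothed density at scale `n` is at most `l ^ k * M⁻¹ ^ (n / k)`. -/
theorem exists_invariant (hl : 0 < l) {k M : ℕ} (hk : 0 < k) (hM : 0 < M) {w : Fin M → Sig l}
    (hw : ∀ i i' x x', (∀ j < k, x j = w i j) → (∀ j < k, x' j = w i' j) →
      dist (s.q k x) (s.q k x') < 2 → i = i') :
    ∃ μ : Measure (Sig l), IsProbabilityMeasure μ ∧ μ.map shift = μ ∧
      Real.log M / k ≤ projEntropy s.π μ := by
  have : NeZero M := ⟨hM.ne'⟩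
  have hM1 : (1 : ℝ) ≤ M := by exact_mod_cast hM
  have hk0 : (0 : ℝ) < k := by exact_mod_cast hk
  have hl0 : (0 : ℝ) < l := by exact_mod_cast hl
  set ν := (bernoulli M).map (concat k w) with hν
  have hνp : IsProbabilityMeasure ν :=
    Measure.isProbabilityMeasure_map (measurable_concat k w).aemeasurable
  have hνk : ν.map shift^[k] = ν := by
    rw [hν, Measure.map_map (measurable_shift.iterate k) (measurable_concat k w)]
    have : shift^[k] ∘ concat k w = concat k w ∘ shift := by
      funext β
      simpa using shift_concat hk w 1 β
    rw [this, ← Measure.map_map (measurable_concat k w) measurable_shift, map_shift_bernoulli]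
  have hm := isProbabilityMeasure_averaged hk ν
  have hinv := map_shift_averaged ν hνk
  refine ⟨averaged k ν, hm, hinv, ?_⟩
  have hD := s.dens_averaged_le hl hk ν (D := fun n => (M : ℝ)⁻¹ ^ (n / k))
    (s.dens_concat_le hk hw)
    (fun a b hab => pow_le_pow_of_le_one (by positivity) (inv_le_one_of_one_le₀ hM1)
      (Nat.div_le_div_right hab)) (fun n => by positivity)
  have hv := ballVol_pos d
  have hlow : ∀ j : ℕ, ballVol d * (j * Real.log M - k * Real.log l)
      ≤ smoothEnt (averaged k ν) (s.q (k * j)) := by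
    intro j
    have h := le_smoothEnt (averaged k ν) (s.measurable_q (k * j)) (s.norm_q_le (k * j))
      (hD (k * j))
    simp only [Nat.mul_div_cancel_left j hk] at h
    rw [Real.log_mul (by positivity) (by positivity), Real.log_pow, Real.log_pow,
      Real.log_inv] at h
    refine le_trans (le_of_eq ?_) h
    ring
  have hlim := (s.tendsto_smoothEnt_div _ hinv).comp
    (tendsto_id.const_mul_atTop' hk : Tendsto (fun j : ℕ => k * j) atTop atTop)
  have hlim2 : Tendsto (fun j : ℕ => ballVol d * (Real.log M / k)
      - ballVol d * Real.log l / j) atTop (𝓝 (ballVol d * (Real.log M / k))) := by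
    simpa using tendsto_const_nhds.sub
      (tendsto_const_div_atTop_nhds_zero_nat (ballVol d * Real.log l))
  refine le_of_mul_le_mul_left (le_of_tendsto_of_tendsto hlim2 hlim ?_) hv
  filter_upwards [eventually_gt_atTop 0] with j hj
  have hj0 : (0 : ℝ) < j := by exact_mod_cast hj
  simp only [Function.comp_apply, Nat.cast_mul]
  rw [le_div_iff₀ (by positivity)]
  refine le_trans (le_of_eq ?_) (hlow j)
  field_simp

/-- Lower half of the variational principle: at each scale `k` some invariant measure has
projection entropy within `O(1 / k)` of the counting rate. -/
theorem exists_projEntropy_ge (hl : 0 < l) {k : ℕ} (hk : 0 < k) :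
    ∃ μ : Measure (Sig l), IsProbabilityMeasure μ ∧ μ.map shift = μ ∧
      Real.log (s.cells k).ncard / k - d * Real.log s.modulus / k ≤ projEntropy s.π μ := by
  obtain ⟨M, w, hM, hle, hw⟩ := s.exists_separated_words (fun _ => ⟨0, hl⟩) k
  obtain ⟨μ, h1, h2, h3⟩ := s.exists_invariant hl hk hM hw
  refine ⟨μ, h1, h2, le_trans ?_ h3⟩
  have hk0 : (0 : ℝ) < k := by exact_mod_cast hk
  rw [← sub_div]
  refine div_le_div_of_nonneg_right ?_ hk0.le
  have hpos : (0 : ℝ) < (s.cells k).ncard := by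
    exact_mod_cast s.ncard_cells_pos (fun _ => ⟨0, hl⟩) k
  have hL : (0 : ℝ) < s.modulus := by simp [modulus]; positivity
  have hM0 : (0 : ℝ) < M := by exact_mod_cast hM
  have := Real.log_le_log hpos hle
  rw [Real.log_mul (by positivity) hM0.ne', Real.log_pow] at this
  linarith

theorem tendsto_log_ncard (hl : 0 < l) :
    Tendsto (fun n : ℕ => Real.log (s.cells n).ncard / n) atTop
      (𝓝 (sSup {r : ℝ | ∃ μ : Measure (Sig l), IsProbabilityMeasure μ ∧
        Measure.map shift μ = μ ∧ r = projEntropy s.π μ})) := by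
  set H := {r : ℝ | ∃ μ : Measure (Sig l), IsProbabilityMeasure μ ∧
        Measure.map shift μ = μ ∧ r = projEntropy s.π μ} with hH
  have hbdd : BddAbove H := by
    refine ⟨l, ?_⟩
    rintro r ⟨μ, hμ, -, rfl⟩
    exact s.projEntropy_le μ
  have hne : H.Nonempty := by
    obtain ⟨μ, h1, h2, -⟩ := s.exists_projEntropy_ge hl one_pos
    exact ⟨_, μ, h1, h2, rfl⟩
  refine tendsto_order.2 ⟨fun a ha => ?_, fun a ha => ?_⟩
  · obtain ⟨r, ⟨μ, h1, h2, rfl⟩, har⟩ := exists_lt_of_lt_csSup hne ha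
    exact s.eventually_lt_log_ncard (fun _ => ⟨0, hl⟩) μ h2 har
  · have h0 := tendsto_const_div_atTop_nhds_zero_nat (d * Real.log s.modulus)
    filter_upwards [h0.eventually (gt_mem_nhds (sub_pos.2 ha)), eventually_gt_atTop 0]
      with n hn hn0
    obtain ⟨μ, h1, h2, h3⟩ := s.exists_projEntropy_ge hl hn0
    have := le_csSup hbdd (show projEntropy s.π μ ∈ H from ⟨μ, h1, h2, rfl⟩)
    linarith

end AffineCoding

/-! ### The coding map of the attractor -/

section Attractor

variable {d l : ℕ} {A : Eu d →L[ℝ] Eu d} {c : Fin l → Eu d} {K : Set (Eu d)} {π : Sig l → Eu d}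

lemma coding_mem (hπ : ∀ x, (⋂ n, itIm (fun i x => A x + c i) K x n) = {π x}) (x : Sig l) (n : ℕ) :
    π x ∈ itIm (fun i x => A x + c i) K x n := by
  have h : π x ∈ ⋂ n, itIm (fun i x => A x + c i) K x n := by
    rw [hπ]; rfl
  exact mem_iInter.1 h n

/-- The canonical projection satisfies the self-similarity relation of the system. -/
lemma coding_eq (hKattr : K = ⋃ i, (fun x => A x + c i) '' K)
    (hπ : ∀ x, (⋂ n, itIm (fun i x => A x + c i) K x n) = {π x}) (x : Sig l) :
    π x = A (π (shift x)) + c (x 0) := by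
  have h : A (π (shift x)) + c (x 0) ∈ ⋂ n, itIm (fun i x => A x + c i) K x n := by
    refine mem_iInter.2 fun n => ?_
    cases n with
    | zero =>
      change _ ∈ K
      rw [hKattr]
      exact mem_iUnion.2 ⟨x 0, π (shift x), coding_mem hπ (shift x) 0, rfl⟩
    | succ n => exact ⟨π (shift x), coding_mem hπ (shift x) n, rfl⟩
  rw [hπ] at h
  exact h.symm

/-- A bounded solution `π` of the self-similarity relation is measurable, as the pointwise limit of
the iterates of that relation started at `0`. -/
lemma measurable_coding (hA : ‖A‖ < 1) {R : ℝ} (hR : ∀ x, ‖π x‖ ≤ R)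
    (heq : ∀ x, π x = A (π (shift x)) + c (x 0)) : Measurable π := by
  let f : ℕ → Sig l → Eu d := fun n =>
    Nat.rec (fun _ => 0) (fun _ g x => A (g (shift x)) + c (x 0)) n
  have hf : ∀ n, Measurable (f n) := by
    intro n
    induction n with
    | zero => exact measurable_const
    | succ n ih =>
      exact (A.continuous.measurable.comp (ih.comp measurable_shift)).add
        ((measurable_of_finite c).comp (measurable_pi_apply 0))
  have hd : ∀ n x, ‖f n x - π x‖ ≤ ‖A‖ ^ n * R := by
    intro n
    induction n with
    | zero => intro x; simpa [f] using hR x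
    | succ n ih =>
      intro x
      have : f (n + 1) x - π x = A (f n (shift x) - π (shift x)) := by
        rw [heq x, map_sub]
        change A (f n (shift x)) + c (x 0) - _ = _
        abel
      rw [this, pow_succ', mul_assoc]
      exact A.le_of_opNorm_le_of_le le_rfl (ih _)
  refine measurable_of_tendsto_metrizable hf (tendsto_pi_nhds.2 fun x => ?_)
  rw [tendsto_iff_norm_sub_tendsto_zero]
  refine squeeze_zero (fun _ => norm_nonneg _) (fun n => hd n x) ?_
  simpa using (tendsto_pow_atTop_nhds_zero_of_lt_one (norm_nonneg _) hA).mul_const R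

/-- Every point of the attractor has a coding, found by following preimages under the maps. -/
lemma exists_coding (hKattr : K = ⋃ i, (fun x => A x + c i) '' K)
    (hπ : ∀ x, (⋂ n, itIm (fun i x => A x + c i) K x n) = {π x}) {z : Eu d} (hz : z ∈ K) :
    ∃ x, π x = z := by
  have hstep : ∀ z : K, ∃ (i : Fin l) (z' : K), A z' + c i = z := by
    rintro ⟨z, hz⟩
    rw [hKattr] at hz
    obtain ⟨i, z', hz', h⟩ := mem_iUnion.1 hz
    exact ⟨i, ⟨z', hz'⟩, h⟩
  choose dig g hg using hstep
  have key : ∀ n (z : K), (z : Eu d) ∈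
      itIm (fun i x => A x + c i) K (fun n => dig (g^[n] z)) n := by
    intro n
    induction n with
    | zero => exact fun z => z.2
    | succ n ih => exact fun z => ⟨g z, ih (g z), hg z⟩
  have h := mem_iInter.2 fun n => key n ⟨z, hz⟩
  rw [hπ] at h
  exact ⟨_, h.symm⟩

end Attractor

end BoxCounting

/-- **Corollary 2.1** (the case `f = 0`): for the affine IFS `S_i x = A x + c_i` with
`‖A‖ < 1`, attractor `K` and canonical projection `π`,
`lim_n (1/n) log #{Q ∈ 𝒬 : Aⁿ Q ∩ K ≠ ∅}` exists and equals
`sup { h_π(σ,m) : m ∈ M_σ(Σ) }`. -/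
theorem box_counting_eq_sup_projEntropy {d l : ℕ} (hl : 0 < l)
    (A : EuclideanSpace ℝ (Fin d) →L[ℝ] EuclideanSpace ℝ (Fin d))
    (hAbij : Function.Bijective A) (hAnorm : ‖A‖ < 1)
    (c : Fin l → EuclideanSpace ℝ (Fin d))
    (K : Set (EuclideanSpace ℝ (Fin d))) (hKcomp : IsCompact K) (hKne : K.Nonempty)
    (hKattr : K = ⋃ i, (fun x => A x + c i) '' K)
    (π : Sig l → EuclideanSpace ℝ (Fin d))
    (hπ : ∀ x, (⋂ n, itIm (fun i x => A x + c i) K x n) = {π x}) :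
    Tendsto (fun n : ℕ =>
        Real.log (Nat.card {α : Fin d → ℤ // ((⇑(A ^ n) '' cube d α) ∩ K).Nonempty}) / n)
      atTop
      (nhds (sSup {r : ℝ | ∃ μ : Measure (Sig l), IsProbabilityMeasure μ ∧
        Measure.map shift μ = μ ∧ r = projEntropy π μ})) := by
  obtain ⟨R, hR⟩ := hKcomp.isBounded.exists_norm_le
  have hπK : ∀ x, π x ∈ K := fun x => BoxCounting.coding_mem hπ x 0
  have heq := BoxCounting.coding_eq hKattr hπ
  set e : EuclideanSpace ℝ (Fin d) ≃L[ℝ] EuclideanSpace ℝ (Fin d) :=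
    (LinearEquiv.ofBijective (A : EuclideanSpace ℝ (Fin d) →ₗ[ℝ] EuclideanSpace ℝ (Fin d))
      hAbij).toContinuousLinearEquiv with he
  have heA : (e : EuclideanSpace ℝ (Fin d) →L[ℝ] EuclideanSpace ℝ (Fin d)) = A := by
    ext1 z; rfl
  let s : BoxCounting.AffineCoding d l :=
    { e := e
      norm_lt := by rw [heA]; exact hAnorm
      c := c
      π := π
      measurable_π := BoxCounting.measurable_coding hAnorm (fun x => hR _ (hπK x)) heq
      R := R
      norm_le := fun x => hR _ (hπK x)
      π_eq := heq }
  have hcells : ∀ n, {α : Fin d → ℤ | ((⇑(A ^ n) '' cube d α) ∩ K).Nonempty} = s.cells n := by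
    intro n
    have hA : (s.e : EuclideanSpace ℝ (Fin d) →L[ℝ] EuclideanSpace ℝ (Fin d)) = A := heA
    ext α
    constructor
    · rintro ⟨_, ⟨u, hu, rfl⟩, hK⟩
      obtain ⟨x, hx⟩ := BoxCounting.exists_coding hKattr hπ hK
      refine ⟨x, ?_⟩
      have : s.q n x = u := by
        change s.B n (π x) = u
        rw [hx, ← hA, s.B_pow]
      rwa [this]
    · rintro ⟨x, hx⟩
      refine ⟨π x, ⟨s.q n x, hx, ?_⟩, hπK x⟩
      rw [← hA]
      exact s.pow_B n (π x)
  refine (s.tendsto_log_ncard hl).congr fun n => ?_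
  rw [← hcells n, ← Nat.card_coe_set_eq]
  rfl

end
end

section
/- Let {S_i}_{i=1}^l be the affine IFS S_i(x) = A x + c_i on ℝ^d with ‖A‖ < 1, K its attractor, and π : Σ → K the canonical projection. Then for every m ∈ M_σ(Σ), h_π(σ, m) = lim_{n→∞} H_m(π^{−1}Q_n)/n, where H_m(π^{−1}Q_n) is the entropy of the countable partition {π^{−1}(Q) : Q ∈ Q_n} with respect to m. -/
/-!
Write `H` for Shannon entropy, `u_n(x)` for the index of the cell of `𝒬_n` containing `π x`,
`W_k(x)` for the first `k` symbols of `x`, and `a_n = H(u_n)`.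

Since `π x = A^k π(σ^k x) + b` with `b` depending only on `W_k(x)`, the cell of `π x` in `𝒬_{n+k}`
and the cell of `π(σ^k x)` in `𝒬_n` are related, once `W_k` is known, by a translation of the unit
lattice. They determine each other up to `2^d` possibilities, so `H(W_k, u_n ∘ σ^k)` and
`H(W_k, u_{n+k})` differ by at most a constant `C`, which does not depend on `n` or `k`
(`abs_ent_word_cell_sub_le`). By invariance of `m`, `a_{n+k} - a_n` is therefore within `C` of
`H(W_k | u_n ∘ σ^k) - H(W_k | u_{n+k})`.

For fixed `k` this last difference converges to `k * h_π(σ, m)` as `n → ∞`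
(`tendsto_increment`). The proof is an induction on `k` by the chain rule, and uses two facts. The
diameter of the cells tends to `0`, so that conditional entropies given `u_n`, possibly together
with a fixed finite partition, converge to those given `π` (`tendsto_ent_cell`); as the partitions
`𝒬_n` are not nested, this rests on `L¹` contraction of conditional expectation
(`tendsto_eLpNorm_condExp_sub`) instead of a martingale theorem. And `π` and `π ∘ σ^k` generate
the same `σ`-algebra together with `W_k` (`comap_prodMk_eq`).

Hence `a_{n+k} - a_n = k * h_π(σ, m) + O(1)` with a constant independent of `k`, for `n` large
depending on `k`; dividing by `k` and letting `k` grow gives the limit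
(`tendsto_div_of_increments`).
-/

/- Projection pressure for affine IFS (Wang–Chen).
   Statement 7: projection entropy as a limit of partition entropies (Lemma 2.4). -/

open MeasureTheory Filter Set

noncomputable section

/-! ### Conditional entropy given a σ-algebra -/

section CondEntropy

variable {Ω : Type*} {m : MeasurableSpace Ω} {m0 : MeasurableSpace Ω} {μ : Measure Ω} [IsProbabilityMeasure μ]

lemma integrable_indicator_one {s : Set Ω} (hs : MeasurableSet s) :
    Integrable (s.indicator (fun _ => (1 : ℝ))) μ :=
  (integrable_const 1).indicator hs

lemma condExp_indicator_mem_Icc (hm : m ≤ m0) {s : Set Ω}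
    (hs : MeasurableSet s) :
    ∀ᵐ x ∂μ, (μ[s.indicator (fun _ => (1 : ℝ)) | m]) x ∈ Icc (0 : ℝ) 1 := by
  have h0 : 0 ≤ᵐ[μ] μ[s.indicator (fun _ => (1 : ℝ)) | m] :=
    condExp_nonneg (ae_of_all _ fun x => indicator_nonneg (fun _ _ => zero_le_one) x)
  have h1 : μ[s.indicator (fun _ => (1 : ℝ)) | m] ≤ᵐ[μ] μ[fun _ => (1 : ℝ) | m] :=
    condExp_mono (integrable_indicator_one hs) (integrable_const 1)
      (ae_of_all _ fun x => indicator_le_self' (fun _ _ => zero_le_one) x)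
  rw [condExp_const hm] at h1
  filter_upwards [h0, h1] with x hx hx' using ⟨hx, hx'⟩

/-- Pull-out for nonnegative functions: an `m`-measurable `F` integrated over `s` sees only the
conditional probability of `s`. No integrability of `F` is needed. -/
lemma setLIntegral_eq_lintegral_condExp_mul (hm : m ≤ m0) {s : Set Ω}
    (hs : MeasurableSet s) {F : Ω → ENNReal} (hF : Measurable[m] F) :
    ∫⁻ x in s, F x ∂μ =
      ∫⁻ x, ENNReal.ofReal ((μ[s.indicator (fun _ => (1 : ℝ)) | m]) x) * F x ∂μ := by
  set E := μ[s.indicator (fun _ => (1 : ℝ)) | m] with hE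
  have hEm : Measurable[m] E := stronglyMeasurable_condExp.measurable
  have hEo : Measurable[m] (fun x => ENNReal.ofReal (E x)) := hEm.ennreal_ofReal
  have key : (μ.restrict s).trim hm = (μ.trim hm).withDensity (fun x => ENNReal.ofReal (E x)) := by
    refine @Measure.ext Ω m _ _ fun t ht => ?_
    rw [trim_measurableSet_eq hm ht, withDensity_apply _ ht, Measure.restrict_apply (hm t ht),
      restrict_trim hm μ ht, lintegral_trim hm hEo,
      ← ofReal_integral_eq_lintegral_ofReal integrable_condExp.integrableOn
        (ae_restrict_of_ae ((condExp_indicator_mem_Icc hm hs).mono fun x hx => hx.1)),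
      setIntegral_condExp hm (integrable_indicator_one hs) ht, setIntegral_indicator hs]
    simp
  rw [← lintegral_trim hm hF, key, lintegral_withDensity_eq_lintegral_mul _ hEo hF]
  rw [lintegral_trim hm (hEo.mul hF)]
  rfl

/-- Integrating the information function of `s` over `s` gives the mean of `-p log p`. -/
lemma setIntegral_neg_log_condExp (hm : m ≤ m0) {s : Set Ω}
    (hs : MeasurableSet s) :
    ∫ x in s, -Real.log ((μ[s.indicator (fun _ => (1 : ℝ)) | m]) x) ∂μ =
      ∫ x, Real.negMulLog ((μ[s.indicator (fun _ => (1 : ℝ)) | m]) x) ∂μ := by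
  have hEm : Measurable[m] (μ[s.indicator (fun _ => (1 : ℝ)) | m]) :=
    stronglyMeasurable_condExp.measurable
  have hI := condExp_indicator_mem_Icc (μ := μ) hm hs
  set E := μ[s.indicator (fun _ => (1 : ℝ)) | m] with hE
  have hlog : Measurable[m] (fun x => -Real.log (E x)) := (Real.measurable_log.comp hEm).neg
  have hnml : Measurable (fun x => Real.negMulLog (E x)) :=
    Real.continuous_negMulLog.measurable.comp (hEm.mono hm le_rfl)
  rw [integral_eq_lintegral_of_nonneg_ae, integral_eq_lintegral_of_nonneg_ae,
    setLIntegral_eq_lintegral_condExp_mul hm hs hlog.ennreal_ofReal]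
  · congr 1
    refine lintegral_congr_ae ?_
    filter_upwards [hI] with x hx
    rw [← hE, ← ENNReal.ofReal_mul hx.1, Real.negMulLog]
    congr 1; ring
  · filter_upwards [hI] with x hx using Real.negMulLog_nonneg hx.1 hx.2
  · exact hnml.aestronglyMeasurable
  · refine ae_restrict_of_ae ?_
    filter_upwards [hI] with x hx using neg_nonneg.2 (Real.log_nonpos hx.1 hx.2)
  · exact (hlog.mono hm le_rfl).aestronglyMeasurable

lemma condEntropyPart_eq_sum_negMulLog {ι : Type*} [Fintype ι] 
    (hm : m ≤ m0) {s : ι → Set Ω} (hs : ∀ i, MeasurableSet (s i)) :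
    condEntropyPart μ s m =
      ∑ i, ∫ x, Real.negMulLog ((μ[(s i).indicator (fun _ => (1 : ℝ)) | m]) x) ∂μ :=
  Finset.sum_congr rfl fun i _ => setIntegral_neg_log_condExp hm (hs i)

lemma negMulLog_mem_Icc {x : ℝ} (hx : x ∈ Icc (0 : ℝ) 1) : Real.negMulLog x ∈ Icc (0 : ℝ) 1 := by
  refine ⟨Real.negMulLog_nonneg hx.1 hx.2, ?_⟩
  have := Real.negMulLog_le_one_sub_self hx.1
  linarith [hx.1]

lemma condEntropyPart_le_card {ι : Type*} [Fintype ι] 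
    (hm : m ≤ m0) {s : ι → Set Ω} (hs : ∀ i, MeasurableSet (s i)) :
    condEntropyPart μ s m ≤ Fintype.card ι := by
  rw [condEntropyPart_eq_sum_negMulLog hm hs]
  calc _ ≤ ∑ _i : ι, (1 : ℝ) := Finset.sum_le_sum fun i _ => ?_
    _ = _ := by simp
  calc _ ≤ ∫ _, (1 : ℝ) ∂μ := by
        refine integral_mono_of_nonneg ?_ (integrable_const 1) ?_
        · filter_upwards [condExp_indicator_mem_Icc hm (hs i)] with x hx
            using (negMulLog_mem_Icc hx).1
        · filter_upwards [condExp_indicator_mem_Icc hm (hs i)] with x hx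
            using (negMulLog_mem_Icc hx).2
    _ = 1 := by simp

/-- `L¹` convergence of conditional probabilities gives convergence of conditional entropies. -/
lemma tendsto_condEntropyPart {ι : Type*} [Fintype ι]
    {Gn : ℕ → MeasurableSpace Ω} (hG : m ≤ m0) (hGn : ∀ n, Gn n ≤ m0)
    {s : ι → Set Ω} (hs : ∀ i, MeasurableSet (s i))
    (h : ∀ i, Tendsto (fun n => eLpNorm (μ[(s i).indicator (fun _ => (1 : ℝ)) | Gn n] -
      μ[(s i).indicator (fun _ => (1 : ℝ)) | m]) 1 μ) atTop (nhds 0)) :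
    Tendsto (fun n => condEntropyPart μ s (Gn n)) atTop (nhds (condEntropyPart μ s m)) := by
  simp_rw [fun n => condEntropyPart_eq_sum_negMulLog (μ := μ) (hGn n) hs,
    condEntropyPart_eq_sum_negMulLog (μ := μ) hG hs]
  refine tendsto_finsetSum _ fun i _ => tendsto_of_subseq_tendsto fun ns hns => ?_
  have hE : ∀ G ≤ m0, Measurable[m0] (μ[(s i).indicator (fun _ => (1 : ℝ)) | G]) := fun G hG =>
    stronglyMeasurable_condExp.measurable.mono hG le_rfl
  obtain ⟨ms, -, hms⟩ := (tendstoInMeasure_of_tendsto_eLpNorm one_ne_zero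
    (fun n => (hE _ (hGn (ns n))).aestronglyMeasurable) (hE m hG).aestronglyMeasurable
    ((h i).comp hns)).exists_seq_tendsto_ae
  refine ⟨ms, tendsto_integral_of_dominated_convergence (fun _ => (1 : ℝ))
    (fun n => (Real.continuous_negMulLog.measurable.comp (hE _ (hGn _))).aestronglyMeasurable)
    (integrable_const 1) (fun n => ?_) ?_⟩
  · filter_upwards [condExp_indicator_mem_Icc (hGn (ns (ms n))) (hs i)] with x hx
    have := negMulLog_mem_Icc hx
    rw [Real.norm_of_nonneg this.1]; exact this.2
  · filter_upwards [hms] with x hx using (Real.continuous_negMulLog.tendsto _).comp hx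

/-- Conditional expectations onto the `σ`-algebras generated by maps `p n` converge in `L¹`, as
soon as knowing `p n x` locates `Φ x` asymptotically. The `p n` need not be nested: continuous
functions of `Φ` are approximated by functions of `p n`, and conditional expectation contracts
`L¹`. -/
lemma tendsto_eLpNorm_condExp_sub {X κ : Type*} [TopologicalSpace X]
    [TopologicalSpace.PseudoMetrizableSpace X] [MeasurableSpace X] [BorelSpace X]
    [MeasurableSpace κ] [DiscreteMeasurableSpace κ] {Φ : Ω → X} (hΦ : Measurable Φ)
    {p : ℕ → Ω → κ}
    (hpΦ : ∀ n, MeasurableSpace.comap (p n) inferInstance ≤ MeasurableSpace.comap Φ inferInstance)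
    (hloc : ∀ (x : Ω) (y : ℕ → Ω), (∀ n, p n (y n) = p n x) →
      Tendsto (fun n => Φ (y n)) atTop (nhds (Φ x)))
    (F : Ω → ℝ) :
    Tendsto (fun n => eLpNorm (μ[F | MeasurableSpace.comap (p n) inferInstance] -
      μ[F | MeasurableSpace.comap Φ inferInstance]) 1 μ) atTop (nhds 0) := by
  have hG : MeasurableSpace.comap Φ inferInstance ≤ m0 := hΦ.comap_le
  set E := μ[F | MeasurableSpace.comap Φ inferInstance] with hE
  have hEint : Integrable E μ := integrable_condExp
  -- factor the limit through `Φ`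
  obtain ⟨e, he, heE⟩ : ∃ e : X → ℝ, Measurable e ∧ E = e ∘ Φ :=
    (stronglyMeasurable_condExp (f := F) (m := MeasurableSpace.comap Φ inferInstance) (μ := μ)).measurable.exists_eq_measurable_comp
  have hmap : IsProbabilityMeasure (μ.map Φ) := Measure.isProbabilityMeasure_map hΦ.aemeasurable
  have heint : MemLp e 1 (μ.map Φ) := by
    rw [memLp_map_measure_iff he.aestronglyMeasurable hΦ.aemeasurable, ← heE]
    exact memLp_one_iff_integrable.2 hEint
  rw [ENNReal.tendsto_nhds_zero]
  intro ε hε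
  have hε4 : 0 < ε / 2 / 2 :=
    ENNReal.div_pos (ENNReal.div_pos hε.ne' (by norm_num)).ne' (by norm_num)
  obtain ⟨u, hu, -⟩ := heint.exists_boundedContinuous_eLpNorm_sub_le ENNReal.one_ne_top hε4.ne'
  have hu' : eLpNorm (E - u ∘ Φ) 1 μ ≤ ε / 2 / 2 := by
    rw [eLpNorm_map_measure ((he.sub u.continuous.measurable).aestronglyMeasurable) hΦ.aemeasurable] at hu
    rw [heE]; exact hu
  have hΩ : Nonempty Ω := μ.nonempty_of_neZero
  -- `r n` picks a point in each `p n`-cell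
  let r : ℕ → κ → Ω := fun n => Function.invFun (p n)
  have hr : ∀ n x, p n (r n (p n x)) = p n x := fun n x => Function.invFun_eq ⟨x, rfl⟩
  let w : ℕ → Ω → ℝ := fun n x => u (Φ (r n (p n x)))
  have hwG : ∀ n, Measurable[MeasurableSpace.comap (p n) inferInstance] (w n) := fun n =>
    (Measurable.of_discrete (f := fun k => u (Φ (r n k)))).comp (comap_measurable (p n))
  have hpm : ∀ n, MeasurableSpace.comap (p n) inferInstance ≤ m0 := fun n => (hpΦ n).trans hG
  have hwm : ∀ n, Measurable (w n) := fun n => (hwG n).mono (hpm n) le_rfl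
  have hwint : ∀ n, Integrable (w n) μ := fun n =>
    Integrable.of_bound (hwm n).aestronglyMeasurable ‖u‖ (ae_of_all _ fun x => u.norm_coe_le_norm _)
  have hum : Measurable (u ∘ Φ) := u.continuous.measurable.comp hΦ
  have huint : Integrable (u ∘ Φ) μ :=
    Integrable.of_bound hum.aestronglyMeasurable ‖u‖ (ae_of_all _ fun x => u.norm_coe_le_norm _)
  have hw0 : Tendsto (fun n => eLpNorm (w n - u ∘ Φ) 1 μ) atTop (nhds 0) := by
    simp_rw [eLpNorm_one_eq_lintegral_enorm, ← ofReal_norm, Pi.sub_apply]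
    refine tendsto_lintegral_norm_of_dominated_convergence (bound := fun _ => ‖u‖)
      (fun n => (hwm n).aestronglyMeasurable) ?_ ?_ ?_
    · exact (integrable_const _).2
    · exact fun n => ae_of_all _ fun x => u.norm_coe_le_norm _
    · refine ae_of_all _ fun x => (u.continuous.tendsto _).comp (hloc x _ fun n => hr n x)
  filter_upwards [(ENNReal.tendsto_nhds_zero.1 hw0) _ hε4] with n hn
  have hEw : eLpNorm (E - w n) 1 μ ≤ ε / 2 := by
    have h1 : E - w n = (E - u ∘ Φ) - (w n - u ∘ Φ) := by abel
    rw [h1]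
    refine (eLpNorm_sub_le (hEint.sub huint).1 ((hwint n).sub huint).1 le_rfl).trans ?_
    exact (add_le_add hu' hn).trans (ENNReal.add_halves _).le
  have hcond : μ[F | MeasurableSpace.comap (p n) inferInstance] - E =ᵐ[μ]
      μ[E - w n | MeasurableSpace.comap (p n) inferInstance] - (E - w n) := by
    have h1 := condExp_condExp_of_le (μ := μ) (f := F) (hpΦ n) hG
    have h2 := condExp_sub (μ := μ) hEint (hwint n) (MeasurableSpace.comap (p n) inferInstance)
    rw [condExp_of_stronglyMeasurable (hpm n) (hwG n).stronglyMeasurable (hwint n)] at h2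
    filter_upwards [h1, h2] with x h1 h2
    simp only [Pi.sub_apply] at *
    rw [h2, ← h1]; ring
  rw [eLpNorm_congr_ae hcond]
  refine (eLpNorm_sub_le integrable_condExp.1 (hEint.sub (hwint n)).1 le_rfl).trans ?_
  calc _ ≤ ε / 2 + ε / 2 :=
        add_le_add ((eLpNorm_condExp_le_eLpNorm _ le_rfl).trans hEw) hEw
    _ = ε := ENNReal.add_halves ε

end CondEntropy

set_option linter.unusedSectionVars false

/-! ### Shannon entropy of finite partitions -/

section ShannonEntropy

variable {Ω : Type*} [MeasurableSpace Ω] {μ : Measure Ω} [IsProbabilityMeasure μ]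
  {ι κ : Type*} [Countable ι] [MeasurableSpace ι] [MeasurableSingletonClass ι]
  [Countable κ] [MeasurableSpace κ] [MeasurableSingletonClass κ]

/-- Shannon entropy of the partition into fibres of `f`, written as the mean of the information
function `x ↦ -log μ {y | f y = f x}`; no indexing of the cells is needed. -/
def ent (μ : Measure Ω) (f : Ω → ι) : ℝ := ∫ x, -Real.log (μ.real (f ⁻¹' {f x})) ∂μ

/-- A partition map: measurable with finite range. -/
def IsFin (f : Ω → ι) : Prop := Measurable f ∧ (range f).Finite

lemma IsFin.prodMk {f : Ω → ι} {g : Ω → κ} (hf : IsFin f) (hg : IsFin g) :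
    IsFin (fun x => (f x, g x)) :=
  ⟨hf.1.prodMk hg.1, (hf.2.prod hg.2).subset (by rintro _ ⟨x, rfl⟩; exact ⟨⟨x, rfl⟩, ⟨x, rfl⟩⟩)⟩

lemma IsFin.comp {f : Ω → ι} (hf : IsFin f) {T : Ω → Ω} (hT : Measurable T) :
    IsFin (fun x => f (T x)) :=
  ⟨hf.1.comp hT, hf.2.subset (by rintro _ ⟨x, rfl⟩; exact ⟨T x, rfl⟩)⟩

lemma IsFin.of_finite [Finite ι] {f : Ω → ι} (hf : Measurable f) : IsFin f :=
  ⟨hf, Set.toFinite _⟩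

lemma IsFin.integrable_comp {f : Ω → ι} (hf : IsFin f) (F : ι → ℝ) :
    Integrable (fun x => F (f x)) μ := by
  obtain ⟨C, hC⟩ := (hf.2.image (fun i => ‖F i‖)).bddAbove
  exact Integrable.of_bound (Measurable.of_discrete.comp hf.1).aestronglyMeasurable C
    (ae_of_all _ fun x => hC ⟨f x, ⟨x, rfl⟩, rfl⟩)

lemma IsFin.integrable_info {f : Ω → ι} (hf : IsFin f) :
    Integrable (fun x => -Real.log (μ.real (f ⁻¹' {f x}))) μ :=
  hf.integrable_comp (fun i => -Real.log (μ.real (f ⁻¹' {i})))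

lemma ae_fiber_pos (f : Ω → ι) : ∀ᵐ x ∂μ, 0 < μ.real (f ⁻¹' {f x}) := by
  have h : ∀ᵐ x ∂μ, ∀ i, f x = i → μ (f ⁻¹' {i}) ≠ 0 := by
    refine ae_all_iff.2 fun i => ?_
    by_cases hi : μ (f ⁻¹' {i}) = 0
    · exact measure_mono_null (fun x hx => by
        simp only [mem_compl_iff, mem_ofPred_eq, not_forall] at hx
        exact hx.1) hi
    · exact ae_of_all _ fun _ _ => hi
  filter_upwards [h] with x hx
  exact ENNReal.toReal_pos (hx _ rfl) (measure_ne_top _ _)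

lemma ent_mono {f : Ω → ι} {g : Ω → κ} (hf : IsFin f) (hg : IsFin g)
    (h : ∀ x y, g x = g y → f x = f y) : ent μ f ≤ ent μ g := by
  refine integral_mono_ae hf.integrable_info hg.integrable_info ?_
  filter_upwards [ae_fiber_pos g] with x hx
  exact neg_le_neg (Real.log_le_log hx (measureReal_mono fun y hy => h y x hy))

lemma ent_congr {f : Ω → ι} {g : Ω → κ} (h : ∀ x y, g x = g y ↔ f x = f y) :
    ent μ f = ent μ g := by
  refine integral_congr_ae (ae_of_all _ fun x => ?_)
  have : f ⁻¹' {f x} = g ⁻¹' {g x} := by ext y; exact (h y x).symm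
  simp only [this]

lemma ent_comp {f : Ω → ι} (hf : Measurable f) {T : Ω → Ω} (hT : Measurable T)
    (hTμ : μ.map T = μ) : ent μ (fun x => f (T x)) = ent μ f := by
  have hcell : ∀ i, μ.real ((fun x => f (T x)) ⁻¹' {i}) = μ.real (f ⁻¹' {i}) := fun i => by
    conv_rhs => rw [← hTμ]
    rw [map_measureReal_apply hT (hf (measurableSet_singleton i))]; rfl
  have hm : Measurable (fun x => -Real.log (μ.real (f ⁻¹' {f x}))) :=
    (Measurable.of_discrete (f := fun i => -Real.log (μ.real (f ⁻¹' {i})))).comp hf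
  have h1 := integral_map (μ := μ) hT.aemeasurable (hTμ ▸ hm.aestronglyMeasurable)
  rw [hTμ] at h1
  unfold ent
  simp_rw [hcell]
  exact h1.symm

lemma ent_eq_tsum {f : Ω → ι} (hf : IsFin f) :
    ent μ f = ∑' i, Real.negMulLog (μ (f ⁻¹' {i})).toReal := by
  let F : ι → ℝ := fun i => -Real.log (μ.real (f ⁻¹' {i}))
  have hF : Measurable F := Measurable.of_discrete
  have h1 : ent μ f = ∫ i, F i ∂(μ.map f) := (integral_map hf.1.aemeasurable
    hF.aestronglyMeasurable).symm
  have hint : Integrable F (μ.map f) :=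
    (integrable_map_measure hF.aestronglyMeasurable hf.1.aemeasurable).2 (hf.integrable_comp F)
  rw [h1, integral_countable hint]
  refine tsum_congr fun i => ?_
  rw [map_measureReal_apply hf.1 (measurableSet_singleton i)]
  simp only [F, Real.negMulLog, smul_eq_mul, measureReal_def]
  ring

/-- Conditional entropy given a finite partition satisfies `H(f | g) = H(f, g) - H(g)`. -/
lemma condEntropyPart_comap [Fintype ι] {f : Ω → ι} {g : Ω → κ} (hf : Measurable f)
    (hg : IsFin g) :
    condEntropyPart μ (fun i => f ⁻¹' {i}) (MeasurableSpace.comap g inferInstance) =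
      ent μ (fun x => (f x, g x)) - ent μ g := by
  have hf' : IsFin f := .of_finite hf
  -- the elementary conditional probability of `f = i` given the value `k` of `g`
  let R : ι → κ → ℝ := fun i k => μ.real (f ⁻¹' {i} ∩ g ⁻¹' {k}) / μ.real (g ⁻¹' {k})
  have hfm : ∀ i, MeasurableSet (f ⁻¹' {i}) := fun i => hf (measurableSet_singleton i)
  have hgm : ∀ k, MeasurableSet (g ⁻¹' {k}) := fun k => hg.1 (measurableSet_singleton k)
  have hRint : ∀ i, Integrable (fun x => R i (g x)) μ := fun i => hg.integrable_comp (R i)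
  have hR : ∀ i, (fun x => R i (g x)) =ᵐ[μ]
      μ[(f ⁻¹' {i}).indicator (fun _ => (1 : ℝ)) | MeasurableSpace.comap g inferInstance] := by
    intro i
    refine ae_eq_condExp_of_forall_setIntegral_eq hg.1.comap_le
      (integrable_indicator_one (hfm i)) (fun s _ _ => (hRint i).integrableOn) ?_ ?_
    · rintro _ ⟨S, hS, rfl⟩ -
      have hunion : g ⁻¹' S = ⋃ k : S, g ⁻¹' {k.1} := by ext x; simp
      have hdisj : Pairwise (Function.onFun Disjoint fun k : S => g ⁻¹' {k.1}) := by
        intro a b hab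
        exact Disjoint.preimage _ (by simpa [Subtype.ext_iff] using hab)
      rw [hunion, integral_iUnion (fun k : S => hgm k.1) hdisj (hRint i).integrableOn,
        integral_iUnion (fun k : S => hgm k.1) hdisj (integrable_indicator_one (hfm i)).integrableOn]
      refine tsum_congr fun k => ?_
      have : ∫ x in g ⁻¹' {k.1}, R i (g x) ∂μ = ∫ x in g ⁻¹' {k.1}, R i k.1 ∂μ :=
        setIntegral_congr_fun (hgm k) fun x hx => by
          simp only [mem_preimage, mem_singleton_iff] at hx; simp only [hx]
      rw [this, setIntegral_const, setIntegral_indicator (hfm i), setIntegral_const]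
      simp only [R, smul_eq_mul, mul_one]
      by_cases h0 : μ.real (g ⁻¹' {k.1}) = 0
      · rw [h0, zero_mul, inter_comm]
        exact (le_antisymm (h0 ▸ measureReal_mono inter_subset_right) measureReal_nonneg).symm
      · rw [inter_comm]; field_simp
    · exact ((Measurable.of_discrete (f := R i)).comp
        (comap_measurable g)).stronglyMeasurable.aestronglyMeasurable
  have hfg := hf'.prodMk hg
  have hinfo := (hfg.integrable_info (μ := μ)).sub (hg.integrable_info (μ := μ))
  unfold ent
  rw [← integral_sub hfg.integrable_info hg.integrable_info, ← setIntegral_univ]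
  have hunion : (univ : Set Ω) = ⋃ i, f ⁻¹' {i} := by ext x; simp
  rw [hunion, integral_iUnion_fintype hfm
    (fun a b hab => Disjoint.preimage _ (by simpa using hab)) (fun i => (show Integrable
      (fun x => -Real.log (μ.real ((fun x => (f x, g x)) ⁻¹' {(f x, g x)})) -
        -Real.log (μ.real (g ⁻¹' {g x}))) μ from hinfo).integrableOn)]
  refine Finset.sum_congr rfl fun i _ => ?_
  refine integral_congr_ae ?_
  filter_upwards [ae_restrict_mem (hfm i), ae_restrict_of_ae (hR i),
    ae_restrict_of_ae (ae_fiber_pos (μ := μ) g),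
    ae_restrict_of_ae (ae_fiber_pos (μ := μ) (fun x => (f x, g x)))] with x hx h1 h2 h3
  have hx' : f x = i := hx
  have hpre : (fun x => (f x, g x)) ⁻¹' {(f x, g x)} = f ⁻¹' {i} ∩ g ⁻¹' {g x} := by
    ext y; simp [hx']
  rw [hpre] at h3 ⊢
  rw [← h1, Real.log_div h3.ne' h2.ne']
  ring

/-- Adjoining a finite-valued map raises the entropy by at most the number of its values. -/
lemma ent_prodMk_le [Fintype ι] {f : Ω → ι} {g : Ω → κ} (hf : Measurable f) (hg : IsFin g) :
    ent μ (fun x => (f x, g x)) ≤ ent μ g + Fintype.card ι := by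
  have := condEntropyPart_le_card (μ := μ) hg.1.comap_le
    (fun i => hf (measurableSet_singleton i))
  rw [condEntropyPart_comap hf hg] at this
  linarith

end ShannonEntropy

/-! ### Sequences with almost linear increments -/

section Growth

/-- If all increments of step `k` are `k * h + O(1)` up to an error vanishing along the sequence,
with the `O(1)` independent of `k`, then the sequence grows linearly at rate `h`. -/
lemma tendsto_div_of_increments {a : ℕ → ℝ} {h C : ℝ} {D : ℕ → ℕ → ℝ}
    (hD : ∀ k : ℕ, Tendsto (D k) atTop (nhds (k * h)))
    (ha : ∀ k n, |a (n + k) - a n - D k n| ≤ C) :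
    Tendsto (fun n : ℕ => a n / n) atTop (nhds h) := by
  have hC : 0 ≤ C := (abs_nonneg _).trans (ha 0 0)
  rw [Metric.tendsto_atTop]
  intro ε hε
  obtain ⟨k, hk⟩ := exists_nat_gt ((C + 1) / (ε / 2))
  have hk0 : (0 : ℝ) < k := lt_of_le_of_lt (by positivity) hk
  have hkε : (C + 1) / k < ε / 2 := by
    rw [div_lt_iff₀ (by positivity)] at hk
    rw [div_lt_iff₀ hk0]; linarith
  obtain ⟨N, hN⟩ := Metric.tendsto_atTop.1 (hD k) 1 one_pos
  have hstep : ∀ n ≥ N, |(a (n + k) - (n + k : ℕ) * h) - (a n - n * h)| ≤ C + 1 := by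
    intro n hn
    have h1 := hN n hn
    rw [Real.dist_eq] at h1
    have h2 := ha k n
    rw [abs_lt] at h1
    rw [abs_le] at h2 ⊢
    push_cast
    constructor <;> linarith
  set M := ∑ i ∈ Finset.range (N + k), |a i - i * h| with hM
  have hM0 : 0 ≤ M := Finset.sum_nonneg fun _ _ => abs_nonneg _
  have hbound : ∀ n : ℕ, |a n - n * h| ≤ M + n * ((C + 1) / k) := by
    intro n
    induction n using Nat.strong_induction_on with
    | _ n ih =>
      by_cases hn : n < N + k
      · have : |a n - n * h| ≤ M := Finset.single_le_sum (f := fun i : ℕ => |a i - i * h|)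
          (fun _ _ => abs_nonneg _) (Finset.mem_range.2 hn)
        have : 0 ≤ n * ((C + 1) / k) := by positivity
        linarith
      · have hk1 : 0 < k := by exact_mod_cast hk0
        obtain ⟨n', rfl⟩ : ∃ n', n = n' + k := ⟨n - k, by omega⟩
        have h1 := ih n' (by omega)
        have h2 := hstep n' (by omega)
        have h3 : ((n' + k : ℕ) : ℝ) * ((C + 1) / k) = n' * ((C + 1) / k) + (C + 1) := by
          push_cast; field_simp
        rw [h3]
        rw [abs_le] at h1 h2 ⊢
        constructor <;> linarith
  obtain ⟨n₁, hn₁⟩ := exists_nat_gt (M / (ε / 2))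
  refine ⟨n₁, fun n hn => ?_⟩
  have hn' : M / (ε / 2) < n := hn₁.trans_le (by exact_mod_cast hn)
  have hn0 : (0 : ℝ) < n := lt_of_le_of_lt (by positivity) hn'
  rw [div_lt_iff₀ (by positivity)] at hn'
  have h1 : a n / n - h = (a n - n * h) / n := by field_simp
  rw [Real.dist_eq, h1, abs_div, abs_of_pos hn0, div_lt_iff₀ hn0]
  have h2 := hbound n
  have h3 := mul_lt_mul_of_pos_left hkε hn0
  nlinarith

end Growth

/-! ### Lattice cells -/

section Lattice

variable {d : ℕ}

/-- The index `α` of the cube `Aⁿ([0,1)^d + α)` containing `y`, where `B = A⁻¹`. -/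
def cell (B : EuclideanSpace ℝ (Fin d) →L[ℝ] EuclideanSpace ℝ (Fin d)) (n : ℕ) (y : EuclideanSpace ℝ (Fin d)) : Fin d → ℤ := fun i => ⌊((B ^ n) y) i⌋

lemma measurable_cell (B : EuclideanSpace ℝ (Fin d) →L[ℝ] EuclideanSpace ℝ (Fin d)) (n : ℕ) : Measurable (cell B n) := by
  refine measurable_pi_lambda _ fun i => Int.measurable_floor.comp ?_
  have : Continuous fun y : EuclideanSpace ℝ (Fin d) => ((B ^ n) y) i := by fun_prop
  exact this.measurable

variable {A B : EuclideanSpace ℝ (Fin d) →L[ℝ] EuclideanSpace ℝ (Fin d)}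

lemma pow_inverse (h : ∀ y, A (B y) = y) (n : ℕ) (y : EuclideanSpace ℝ (Fin d)) : (A ^ n) ((B ^ n) y) = y := by
  induction n generalizing y with
  | zero => rfl
  | succ n ih =>
    rw [pow_succ A, pow_succ' B]
    change (A ^ n) (A (B ((B ^ n) y))) = y
    rw [h, ih]

lemma image_cube_eq (hAB : ∀ y, A (B y) = y) (hBA : ∀ y, B (A y) = y) (n : ℕ) (α : Fin d → ℤ) :
    ⇑(A ^ n) '' cube d α = cell B n ⁻¹' {α} := by
  have hcube : ∀ z : EuclideanSpace ℝ (Fin d), z ∈ cube d α ↔ (fun i => ⌊z i⌋) = α := fun z => by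
    simp only [cube, funext_iff, Int.floor_eq_iff]; rfl
  ext y
  constructor
  · rintro ⟨z, hz, rfl⟩
    rw [hcube] at hz
    change (fun i => ⌊((B ^ n) ((A ^ n) z)) i⌋) = α
    rw [pow_inverse hBA]
    exact hz
  · intro hy
    exact ⟨(B ^ n) y, (hcube _).2 hy, pow_inverse hAB n y⟩

lemma norm_sub_le_of_cell_eq (hAB : ∀ y, A (B y) = y) {n : ℕ} {y z : EuclideanSpace ℝ (Fin d)}
    (h : cell B n y = cell B n z) : ‖y - z‖ ≤ ‖A‖ ^ n * √d := by
  have h1 : y - z = (A ^ n) ((B ^ n) y - (B ^ n) z) := by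
    rw [map_sub, pow_inverse hAB, pow_inverse hAB]
  have h2 : ‖(B ^ n) y - (B ^ n) z‖ ≤ √d := by
    rw [EuclideanSpace.norm_eq]
    refine Real.sqrt_le_sqrt ?_
    calc _ ≤ ∑ _i : Fin d, (1 : ℝ) := Finset.sum_le_sum fun i _ => ?_
      _ = d := by simp
    have h3 := Int.abs_sub_lt_one_of_floor_eq_floor (congrFun h i)
    rw [PiLp.sub_apply, Real.norm_eq_abs]
    nlinarith [abs_nonneg (((B ^ n) y) i - ((B ^ n) z) i)]
  rw [h1]
  calc _ ≤ ‖A ^ n‖ * ‖(B ^ n) y - (B ^ n) z‖ := (A ^ n).le_opNorm _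
    _ ≤ ‖A‖ ^ n * √d := by
      refine mul_le_mul ?_ h2 (norm_nonneg _) (by positivity)
      rcases Nat.eq_zero_or_pos n with rfl | hn
      · rw [pow_zero, pow_zero]; exact ContinuousLinearMap.norm_id_le
      · exact norm_pow_le' A hn

/-- The cells of level `n` met by a bounded set are finitely many. -/
lemma isFin_cell {Ω : Type*} [MeasurableSpace Ω] {φ : Ω → EuclideanSpace ℝ (Fin d)} (hφ : Measurable φ) {R : ℝ}
    (hR : ∀ x, ‖φ x‖ ≤ R) (B : EuclideanSpace ℝ (Fin d) →L[ℝ] EuclideanSpace ℝ (Fin d)) (n : ℕ) : IsFin (fun x => cell B n (φ x)) := by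
  refine ⟨(measurable_cell B n).comp hφ, ?_⟩
  let S := ‖B ^ n‖ * R
  refine (Set.finite_Icc (fun _ : Fin d => ⌊-S⌋) (fun _ => ⌊S⌋)).subset ?_
  rintro _ ⟨x, rfl⟩
  have h1 : ∀ i, |((B ^ n) (φ x)) i| ≤ S := fun i => by
    have h2 := (PiLp.norm_apply_le ((B ^ n) (φ x)) i)
    exact (h2.trans ((B ^ n).le_opNorm _)).trans
      (mul_le_mul_of_nonneg_left (hR x) (norm_nonneg _))
  exact ⟨fun i => Int.floor_le_floor (abs_le.1 (h1 i)).1,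
    fun i => Int.floor_le_floor (abs_le.1 (h1 i)).2⟩

/-- Translating the lattice moves the index of the cell by one of at most `2 ^ d` vectors. -/
lemma cell_add_apply (hBA : ∀ y, B (A y) = y) (n k : ℕ) (z b : EuclideanSpace ℝ (Fin d)) (i : Fin d) :
    cell B (n + k) ((A ^ k) z + b) i - cell B n z i - cell B (n + k) b i = 0 ∨
      cell B (n + k) ((A ^ k) z + b) i - cell B n z i - cell B (n + k) b i = 1 := by
  have h1 : (B ^ (n + k)) ((A ^ k) z + b) = (B ^ n) z + (B ^ (n + k)) b := by
    rw [map_add]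
    congr 1
    rw [pow_add]
    change (B ^ n) ((B ^ k) ((A ^ k) z)) = _
    rw [pow_inverse hBA]
  simp only [cell, h1, PiLp.add_apply]
  generalize ((B ^ n) z) i = s
  generalize ((B ^ (n + k)) b) i = t
  have h2 := Int.le_floor_add s t
  have h3 := Int.le_floor_add_floor s t
  omega

end Lattice

/-! ### Limits of conditional entropies along the cells -/

section Limits

variable {Ω : Type*} {m0 : MeasurableSpace Ω} {μ : Measure Ω} [IsProbabilityMeasure μ]
  {ι κ : Type*} [Countable ι] [MeasurableSpace ι] [MeasurableSingletonClass ι] [Fintype ι]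
  [Countable κ] [MeasurableSpace κ] [MeasurableSingletonClass κ]
  {d : ℕ} {A B : EuclideanSpace ℝ (Fin d) →L[ℝ] EuclideanSpace ℝ (Fin d)}

/-- The lattice cells of level `n` see, in the limit, the whole `σ`-algebra generated by `φ`;
the finite partition `g` is kept throughout. -/
lemma tendsto_ent_cell (hAB : ∀ y, A (B y) = y) (hA : ‖A‖ < 1)
    {f : Ω → ι} (hf : Measurable f) {g : Ω → κ} (hg : IsFin g)
    {φ : Ω → EuclideanSpace ℝ (Fin d)} (hφ : Measurable φ) {R : ℝ} (hR : ∀ x, ‖φ x‖ ≤ R) :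
    Tendsto (fun n => ent μ (fun x => (f x, (g x, cell B n (φ x)))) -
        ent μ (fun x => (g x, cell B n (φ x)))) atTop
      (nhds (condEntropyPart μ (fun i => f ⁻¹' {i})
        (MeasurableSpace.comap (fun x => (g x, φ x)) inferInstance))) := by
  have hfin : ∀ n, IsFin (fun x => (g x, cell B n (φ x))) :=
    fun n => hg.prodMk (isFin_cell hφ hR B n)
  simp_rw [← fun n => condEntropyPart_comap (μ := μ) hf (hfin n)]
  have hfm : ∀ i, MeasurableSet (f ⁻¹' {i}) := fun i => hf (measurableSet_singleton i)
  have hgφ : Measurable (fun x => (g x, φ x)) := hg.1.prodMk hφ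
  refine tendsto_condEntropyPart hgφ.comap_le (fun n => (hfin n).1.comap_le) hfm fun i => ?_
  let _ : TopologicalSpace κ := ⊥
  have _ : DiscreteTopology κ := ⟨rfl⟩
  refine tendsto_eLpNorm_condExp_sub (κ := κ × (Fin d → ℤ)) hgφ (fun n => ?_) ?_ _
  · have : (fun x => (g x, cell B n (φ x))) =
        (fun q : κ × EuclideanSpace ℝ (Fin d) => (q.1, cell B n q.2)) ∘ fun x => (g x, φ x) := rfl
    rw [this, ← MeasurableSpace.comap_comp]
    refine MeasurableSpace.comap_mono (Measurable.comap_le ?_)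
    exact measurable_fst.prodMk ((measurable_cell B n).comp measurable_snd)
  · intro x y hxy
    have h1 : ∀ n, g (y n) = g x := fun n => (Prod.ext_iff.1 (hxy n)).1
    have h2 : ∀ n, cell B n (φ (y n)) = cell B n (φ x) := fun n => (Prod.ext_iff.1 (hxy n)).2
    refine Tendsto.prodMk_nhds ?_ ?_
    · simp_rw [h1]; exact tendsto_const_nhds
    · rw [tendsto_iff_norm_sub_tendsto_zero]
      refine squeeze_zero (fun _ => norm_nonneg _)
        (fun n => norm_sub_le_of_cell_eq hAB (h2 n)) ?_
      simpa using (tendsto_pow_atTop_nhds_zero_of_lt_one (norm_nonneg A) hA).mul_const (√d)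

/-- A map that is a function of the discrete map `g` is measurable for the `σ`-algebra of `g`. -/
lemma measurable_comap_of_factors {g : Ω → κ} {X : Type*} [MeasurableSpace X] [Nonempty X]
    {β : Ω → X} (h : ∀ x y, g x = g y → β x = β y) :
    Measurable[MeasurableSpace.comap g inferInstance] β := by
  classical
  have hfac : Function.FactorsThrough β g := fun x y h' => h x y h'
  have : β = Function.extend g β (fun _ => Classical.arbitrary X) ∘ g := by
    funext x
    exact (hfac.extend_apply _ x).symm
  rw [this]
  exact Measurable.of_discrete.comp (comap_measurable g)

/-- If `φ` and `ψ` differ by an invertible map and a translation known from `g`, then together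
with `g` they generate the same `σ`-algebra. -/
lemma comap_prodMk_eq {g : Ω → κ} {φ ψ β : Ω → EuclideanSpace ℝ (Fin d)}
    {T T' : EuclideanSpace ℝ (Fin d) → EuclideanSpace ℝ (Fin d)}
    (hT : Measurable T) (hT' : Measurable T') (hTT : ∀ y, T' (T y) = y)
    (hβ : ∀ x y, g x = g y → β x = β y) (h : ∀ x, φ x = T (ψ x) + β x) :
    MeasurableSpace.comap (fun x => (g x, φ x)) inferInstance =
      MeasurableSpace.comap (fun x => (g x, ψ x)) inferInstance := by
  have hβm := measurable_comap_of_factors hβ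
  have e1 := MeasurableSpace.comap_prodMk (mβ := inferInstance) (mγ := inferInstance) g φ
  have e2 := MeasurableSpace.comap_prodMk (mβ := inferInstance) (mγ := inferInstance) g ψ
  have hφm := comap_measurable (m := inferInstance) φ
  have hψm := comap_measurable (m := inferInstance) ψ
  refine e1.trans (Eq.trans ?_ e2.symm)
  refine le_antisymm (sup_le le_sup_left ?_) (sup_le le_sup_left ?_)
  · rw [← measurable_iff_comap_le, funext h]
    exact Measurable.add (hT.comp (hψm.mono le_sup_right le_rfl)) (hβm.mono le_sup_left le_rfl)
  · have h' : ψ = fun x => T' (φ x - β x) := by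
      funext x; rw [h x, add_sub_cancel_right, hTT]
    rw [← measurable_iff_comap_le, h']
    exact hT'.comp
      (Measurable.sub (hφm.mono le_sup_right le_rfl) (hβm.mono le_sup_left le_rfl))

end Limits

/-! ### Coding of the attractor -/

section Symbolic

variable {d l : ℕ} {A B : EuclideanSpace ℝ (Fin d) →L[ℝ] EuclideanSpace ℝ (Fin d)}
  {c : Fin l → EuclideanSpace ℝ (Fin d)} {K : Set (EuclideanSpace ℝ (Fin d))}
  {π : Sig l → EuclideanSpace ℝ (Fin d)}

lemma measurable_shift : Measurable (shift (l := l)) :=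
  measurable_pi_lambda _ fun n => measurable_pi_apply (n + 1)

/-- The first `k` symbols of `x`. -/
def word (k : ℕ) (x : Sig l) : Fin k → Fin l := fun i => x i

lemma measurable_word (k : ℕ) : Measurable (word (l := l) k) :=
  measurable_pi_lambda _ fun i => measurable_pi_apply (i : ℕ)

lemma word_succ_eq_iff (k : ℕ) (x y : Sig l) :
    word (k + 1) x = word (k + 1) y ↔ x 0 = y 0 ∧ word k (shift x) = word k (shift y) := by
  simp only [word, funext_iff, Fin.forall_fin_succ]
  rfl

/-- The translation part of `S_{x 0} ∘ ⋯ ∘ S_{x (k-1)}`. -/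
def transl (A : EuclideanSpace ℝ (Fin d) →L[ℝ] EuclideanSpace ℝ (Fin d))
    (c : Fin l → EuclideanSpace ℝ (Fin d)) : ℕ → Sig l → EuclideanSpace ℝ (Fin d)
  | 0, _ => 0
  | k + 1, x => A (transl A c k (shift x)) + c (x 0)

lemma transl_eq_of_word_eq (k : ℕ) {x y : Sig l} (h : word k x = word k y) :
    transl A c k x = transl A c k y := by
  induction k generalizing x y with
  | zero => rfl
  | succ k ih =>
    rw [word_succ_eq_iff] at h
    simp only [transl, ih h.2, h.1]

lemma measurable_transl (k : ℕ) : Measurable (transl A c k) := by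
  induction k with
  | zero => exact measurable_const
  | succ k ih =>
    exact (A.continuous.measurable.comp (ih.comp measurable_shift)).add
      (Measurable.of_discrete.comp (measurable_pi_apply 0))

lemma proj_mem (hπ : ∀ x, (⋂ n, itIm (fun i x => A x + c i) K x n) = {π x}) (x : Sig l) (n : ℕ) :
    π x ∈ itIm (fun i x => A x + c i) K x n := by
  have : π x ∈ ⋂ n, itIm (fun i x => A x + c i) K x n := by rw [hπ x]; rfl
  exact mem_iInter.1 this n

/-- Equivariance of the canonical projection. -/
lemma proj_eq (hKattr : K = ⋃ i, (fun x => A x + c i) '' K)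
    (hπ : ∀ x, (⋂ n, itIm (fun i x => A x + c i) K x n) = {π x}) (x : Sig l) :
    π x = A (π (shift x)) + c (x 0) := by
  have : A (π (shift x)) + c (x 0) ∈ ⋂ n, itIm (fun i x => A x + c i) K x n := by
    refine mem_iInter.2 fun n => ?_
    cases n with
    | zero =>
      change _ ∈ K
      rw [hKattr]
      exact mem_iUnion.2 ⟨x 0, ⟨_, proj_mem hπ (shift x) 0, rfl⟩⟩
    | succ n => exact ⟨_, proj_mem hπ (shift x) n, rfl⟩
  rw [hπ x] at this
  exact this.symm

lemma proj_eq_iterate (hrel : ∀ x, π x = A (π (shift x)) + c (x 0)) (k : ℕ) (x : Sig l) :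
    π x = (A ^ k) (π (shift^[k] x)) + transl A c k x := by
  induction k generalizing x with
  | zero => simp [transl]
  | succ k ih =>
    rw [hrel x, ih (shift x), transl, map_add, add_assoc, pow_succ', Function.iterate_succ_apply]
    rfl

lemma measurable_proj (hA : ‖A‖ < 1) (hrel : ∀ x, π x = A (π (shift x)) + c (x 0)) {R : ℝ}
    (hR : ∀ x, ‖π x‖ ≤ R) : Measurable π := by
  refine measurable_of_tendsto_metrizable (fun k => measurable_transl (A := A) (c := c) k) ?_
  rw [tendsto_pi_nhds]
  intro x
  rw [tendsto_iff_norm_sub_tendsto_zero]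
  have h0 : Tendsto (fun k => ‖A‖ ^ k * R) atTop (nhds 0) := by
    simpa using (tendsto_pow_atTop_nhds_zero_of_lt_one (norm_nonneg A) hA).mul_const R
  refine squeeze_zero' (Eventually.of_forall fun _ => norm_nonneg _) ?_ h0
  filter_upwards [eventually_gt_atTop 0] with k hk
  have h1 : transl A c k x - π x = -(A ^ k) (π (shift^[k] x)) := by
    rw [proj_eq_iterate hrel k x]; abel
  rw [h1, norm_neg]
  exact ((A ^ k).le_opNorm _).trans
    (mul_le_mul (norm_pow_le' A hk) (hR _) (norm_nonneg _) (by positivity))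

variable {m : Measure (Sig l)} [IsProbabilityMeasure m]

/-- Given the first `k` symbols, the level `n + k` cell of `π x` and the level `n` cell of
`π (σ^k x)` determine each other up to `2 ^ d` possibilities, uniformly in `n` and `k`. -/
lemma abs_ent_word_cell_sub_le (hBA : ∀ y, B (A y) = y)
    (hrel : ∀ x, π x = A (π (shift x)) + c (x 0)) (hπm : Measurable π) {R : ℝ}
    (hR : ∀ x, ‖π x‖ ≤ R) (k n : ℕ) :
    |ent m (fun x => (word k x, cell B n (π (shift^[k] x)))) -
      ent m (fun x => (word k x, cell B (n + k) (π x)))| ≤ Fintype.card (Fin d → Bool) := by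
  have hW : IsFin (word (l := l) k) := .of_finite (measurable_word k)
  have hU : IsFin (fun x => cell B (n + k) (π x)) := isFin_cell hπm hR B _
  have hV : IsFin (fun x => cell B n (π (shift^[k] x))) :=
    isFin_cell (hπm.comp (measurable_shift.iterate k)) (fun _ => hR _) B _
  let δ : Sig l → Fin d → ℤ := fun x i => cell B (n + k) (π x) i -
    cell B n (π (shift^[k] x)) i - cell B (n + k) (transl A c k x) i
  have hδ : ∀ x i, δ x i = 0 ∨ δ x i = 1 := fun x i => by
    simp only [δ]
    rw [proj_eq_iterate hrel k x]
    exact cell_add_apply hBA n k _ _ i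
  have hδm : Measurable δ := by
    refine measurable_pi_lambda _ fun i => ?_
    have h1 := measurable_pi_iff.1 hU.1 i
    have h2 := measurable_pi_iff.1 hV.1 i
    have h3 := measurable_pi_iff.1 ((measurable_cell B (n + k)).comp
      (measurable_transl (A := A) (c := c) k)) i
    exact (h1.sub h2).sub h3
  let D : Sig l → Fin d → Bool := fun x i => decide (δ x i = 1)
  have hD : Measurable D :=
    (Measurable.of_discrete (f := fun (v : Fin d → ℤ) i => decide (v i = 1))).comp hδm
  have hDδ : ∀ x y, D x = D y → δ x = δ y := fun x y h => by
    funext i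
    have h1 := congrFun h i
    simp only [D, decide_eq_decide] at h1
    have := hδ x i
    have := hδ y i
    omega
  have hDf : IsFin D := .of_finite hD
  have key : ∀ x y, D x = D y → word k x = word k y → ∀ i,
      cell B (n + k) (π x) i - cell B n (π (shift^[k] x)) i =
        cell B (n + k) (π y) i - cell B n (π (shift^[k] y)) i := by
    intro x y h1 h2 i
    have h3 := congrFun (hDδ x y h1) i
    simp only [δ, transl_eq_of_word_eq k h2] at h3
    omega
  rw [abs_le]
  constructor
  · have h1 := ent_mono (μ := m) (hW.prodMk hU) (hDf.prodMk (hW.prodMk hV)) (fun x y h => by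
      simp only [Prod.mk.injEq] at h ⊢
      refine ⟨h.2.1, funext fun i => ?_⟩
      have := key x y h.1 h.2.1 i
      have := congrFun h.2.2 i
      omega)
    have h2 := ent_prodMk_le (μ := m) hD (hW.prodMk hV)
    linarith
  · have h1 := ent_mono (μ := m) (hW.prodMk hV) (hDf.prodMk (hW.prodMk hU)) (fun x y h => by
      simp only [Prod.mk.injEq] at h ⊢
      refine ⟨h.2.1, funext fun i => ?_⟩
      have := key x y h.1 h.2.1 i
      have := congrFun h.2.2 i
      omega)
    have h2 := ent_prodMk_le (μ := m) hD (hW.prodMk hU)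
    linarith

end Symbolic

/-! ### The limit of the increments -/

section Main

variable {d l : ℕ} {A B : EuclideanSpace ℝ (Fin d) →L[ℝ] EuclideanSpace ℝ (Fin d)}
  {c : Fin l → EuclideanSpace ℝ (Fin d)} {π : Sig l → EuclideanSpace ℝ (Fin d)}
  {m : Measure (Sig l)} [IsProbabilityMeasure m]

lemma measurable_head : Measurable (fun x : Sig l => x 0) := measurable_pi_apply 0

/-- Conditioning on cells alone: the case of a trivial finite partition. -/
lemma tendsto_ent_head_cell (hAB : ∀ y, A (B y) = y) (hA : ‖A‖ < 1)
    {φ : Sig l → EuclideanSpace ℝ (Fin d)} (hφ : Measurable φ) {R : ℝ} (hR : ∀ x, ‖φ x‖ ≤ R) :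
    Tendsto (fun n => ent m (fun x => (x 0, cell B n (φ x))) -
        ent m (fun x => cell B n (φ x))) atTop
      (nhds (condEntropyPart m cylP (MeasurableSpace.comap φ inferInstance))) := by
  have h := tendsto_ent_cell (μ := m) hAB hA measurable_head
    (g := fun _ => ()) (.of_finite measurable_const) hφ hR
  have h1 : MeasurableSpace.comap (fun x => ((), φ x)) inferInstance =
      MeasurableSpace.comap φ inferInstance := by
    refine (MeasurableSpace.comap_prodMk (mβ := inferInstance) (mγ := inferInstance)
      (fun _ => ()) φ).trans ?_
    rw [MeasurableSpace.comap_const, bot_sup_eq]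
  rw [h1] at h
  refine h.congr fun n => ?_
  congr 1
  · exact ent_congr fun x y => by simp
  · exact ent_congr fun x y => by simp

/-- The difference of the conditional entropies of `f` given the cells of `φ` and of `ψ` tends to
zero if `φ` and `ψ` carry the same information modulo `g`. -/
lemma tendsto_ent_cell_sub {ι κ : Type*} [Countable ι] [MeasurableSpace ι]
    [MeasurableSingletonClass ι] [Fintype ι]
    [Countable κ] [MeasurableSpace κ] [MeasurableSingletonClass κ]
    (hAB : ∀ y, A (B y) = y) (hBA : ∀ y, B (A y) = y) (hA : ‖A‖ < 1)
    {f : Sig l → ι} (hf : Measurable f) {g : Sig l → κ} (hg : IsFin g)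
    {φ ψ β : Sig l → EuclideanSpace ℝ (Fin d)} (hφ : Measurable φ) (hψ : Measurable ψ) {R : ℝ}
    (hφR : ∀ x, ‖φ x‖ ≤ R) (hψR : ∀ x, ‖ψ x‖ ≤ R) (k : ℕ)
    (hβ : ∀ x y, g x = g y → β x = β y) (h : ∀ x, φ x = (A ^ k) (ψ x) + β x) (a b : ℕ) :
    Tendsto (fun n =>
      (ent m (fun x => (f x, (g x, cell B (n + a) (ψ x)))) -
        ent m (fun x => (g x, cell B (n + a) (ψ x)))) -
      (ent m (fun x => (f x, (g x, cell B (n + b) (φ x)))) -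
        ent m (fun x => (g x, cell B (n + b) (φ x))))) atTop (nhds 0) := by
  have h1 := (tendsto_ent_cell (μ := m) hAB hA hf hg hψ hψR).comp (tendsto_add_atTop_nat a)
  have h2 := (tendsto_ent_cell (μ := m) hAB hA hf hg hφ hφR).comp (tendsto_add_atTop_nat b)
  rw [comap_prodMk_eq (A ^ k).continuous.measurable (B ^ k).continuous.measurable
    (pow_inverse hBA k) hβ h] at h2
  simpa using h1.sub h2

/-- The entropy gained in `k` steps, once the uniformly bounded comparison error is split off, is
asymptotically `k` times the projection entropy. -/
lemma tendsto_increment (hAB : ∀ y, A (B y) = y) (hBA : ∀ y, B (A y) = y) (hA : ‖A‖ < 1)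
    (hrel : ∀ x, π x = A (π (shift x)) + c (x 0)) (hπm : Measurable π) {R : ℝ}
    (hR : ∀ x, ‖π x‖ ≤ R) (hinv : Measure.map shift m = m) (k : ℕ) :
    Tendsto (fun n => ent m (fun x => (word k x, cell B n (π (shift^[k] x)))) -
        ent m (fun x => cell B n (π x)) -
        ent m (fun x => (word k x, cell B (n + k) (π x))) +
        ent m (fun x => cell B (n + k) (π x))) atTop (nhds (k * projEntropy π m)) := by
  induction k with
  | zero =>
    have h0 : ∀ n, ent m (fun x => (word 0 x, cell B n (π x))) = ent m (fun x => cell B n (π x)) :=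
      fun n => ent_congr fun x y => by simp [word, funext_iff]
    simp [h0]
  | succ k ih =>
    have hσ : Measurable (shift (l := l)) := measurable_shift
    have hπσ : Measurable fun x => π (shift x) := hπm.comp hσ
    have hπσk : Measurable fun x => π (shift^[k] (shift x)) :=
      hπm.comp ((hσ.iterate k).comp hσ)
    have hW : Measurable fun x : Sig l => word k (shift x) := (measurable_word k).comp hσ
    -- invariance of `m`, used for the entropies at step `k`
    have i1 : ∀ n, ent m (fun x => cell B n (π (shift x))) = ent m (fun x => cell B n (π x)) :=
      fun n => ent_comp ((measurable_cell B n).comp hπm) hσ hinv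
    have i2 : ∀ n, ent m (fun x => (word k (shift x), cell B n (π (shift^[k] (shift x))))) =
        ent m (fun x => (word k x, cell B n (π (shift^[k] x)))) :=
      fun n => ent_comp (f := fun x => (word k x, cell B n (π (shift^[k] x))))
        ((measurable_word k).prodMk
          ((measurable_cell B n).comp (hπm.comp (hσ.iterate k)))) hσ hinv
    have i3 : ∀ n, ent m (fun x => (word k (shift x), cell B n (π (shift x)))) =
        ent m (fun x => (word k x, cell B n (π x))) :=
      fun n => ent_comp (f := fun x => (word k x, cell B n (π x)))
        ((measurable_word k).prodMk ((measurable_cell B n).comp hπm)) hσ hinv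
    -- regrouping of the symbols `x 0` and `x 1, …, x k`
    have e1 : ∀ n, ent m (fun x => (word (k + 1) x, cell B n (π (shift^[k + 1] x)))) =
        ent m (fun x => (x 0, (word k (shift x), cell B n (π (shift^[k] (shift x)))))) :=
      fun n => ent_congr fun x y => by
        simp only [Prod.mk.injEq, word_succ_eq_iff, Function.iterate_succ_apply, and_assoc]
    have e2 : ∀ n, ent m (fun x => (word (k + 1) x, cell B n (π x))) =
        ent m (fun x => (word k (shift x), (x 0, cell B n (π x)))) :=
      fun n => ent_congr fun x y => by
        simp only [Prod.mk.injEq, word_succ_eq_iff]; tauto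
    have e3 : ∀ n, ent m (fun x => (x 0, (word k (shift x), cell B n (π (shift x))))) =
        ent m (fun x => (word k (shift x), (x 0, cell B n (π (shift x))))) :=
      fun n => ent_congr fun x y => by
        simp only [Prod.mk.injEq]; tauto
    have l1 := (tendsto_ent_head_cell (m := m) hAB hA hπσ (fun _ => hR _)).comp
      (tendsto_add_atTop_nat k)
    have l2 := (tendsto_ent_head_cell (m := m) hAB hA hπm hR).comp (tendsto_add_atTop_nat (k + 1))
    have l3 := tendsto_ent_cell_sub (m := m) hAB hBA hA hW (.of_finite measurable_head) hπm hπσ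
      hR (fun _ => hR _) 1 (β := fun x => c (x 0)) (fun x y h => congrArg c h)
      (fun x => by rw [pow_one]; exact hrel x) k (k + 1)
    have l4 := tendsto_ent_cell_sub (m := m) hAB hBA hA measurable_head (.of_finite hW) hπσ hπσk
      (fun _ => hR _) (fun _ => hR _) k (β := fun x => transl A c k (shift x))
      (fun x y h => transl_eq_of_word_eq k h) (fun x => proj_eq_iterate hrel k (shift x)) 0 k
    have hlim : ((k + 1 : ℕ) : ℝ) * projEntropy π m = k * projEntropy π m +
        (condEntropyPart m cylP (MeasurableSpace.comap (fun x => π (shift x)) inferInstance) -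
          condEntropyPart m cylP (MeasurableSpace.comap π inferInstance)) + 0 + 0 := by
      push_cast
      rw [projEntropy]
      ring
    rw [hlim]
    refine (((ih.add (l1.sub l2)).add l3).add l4).congr fun n => ?_
    simp only [Function.comp_apply, i1, i2, i3, e1, e2, e3, ← add_assoc, add_zero]
    ring

end Main

/-- **Lemma 2.4** (Feng–Hu, Proposition 4.18(i)): for the affine IFS
`S_i x = A x + c_i` with `‖A‖ < 1`, attractor `K` and canonical projection `π`,
and every `m ∈ M_σ(Σ)`,
`h_π(σ, m) = lim_n H_m(π⁻¹ 𝒬_n)/n`, where `H_m(π⁻¹𝒬_n)` is the Shannon entropy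
`∑_{Q ∈ 𝒬_n} −m(π⁻¹Q) log m(π⁻¹Q)` of the countable partition
`{π⁻¹(AⁿQ) : Q ∈ 𝒬}`. -/
theorem projEntropy_eq_lim_partition_entropy {d l : ℕ} (hl : 0 < l)
    (A : EuclideanSpace ℝ (Fin d) →L[ℝ] EuclideanSpace ℝ (Fin d))
    (hAbij : Function.Bijective A) (hAnorm : ‖A‖ < 1)
    (c : Fin l → EuclideanSpace ℝ (Fin d))
    (K : Set (EuclideanSpace ℝ (Fin d))) (hKcomp : IsCompact K) (hKne : K.Nonempty)
    (hKattr : K = ⋃ i, (fun x => A x + c i) '' K)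
    (π : Sig l → EuclideanSpace ℝ (Fin d))
    (hπ : ∀ x, (⋂ n, itIm (fun i x => A x + c i) K x n) = {π x})
    (m : Measure (Sig l)) (hmprob : IsProbabilityMeasure m)
    (hminv : Measure.map shift m = m) :
    Tendsto (fun n : ℕ =>
        (∑' α : Fin d → ℤ, Real.negMulLog (m (π ⁻¹' (⇑(A ^ n) '' cube d α))).toReal) / n)
      atTop (nhds (projEntropy π m)) := by
  -- the inverse of `A`, as a continuous linear map
  obtain ⟨B, hAB, hBA⟩ : ∃ B : EuclideanSpace ℝ (Fin d) →L[ℝ] EuclideanSpace ℝ (Fin d),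
      (∀ y, A (B y) = y) ∧ ∀ y, B (A y) = y := by
    let e : EuclideanSpace ℝ (Fin d) ≃ₗ[ℝ] EuclideanSpace ℝ (Fin d) :=
      LinearEquiv.ofBijective A.toLinearMap hAbij
    exact ⟨LinearMap.toContinuousLinearMap e.symm.toLinearMap,
      fun y => e.apply_symm_apply y, fun y => e.symm_apply_apply y⟩
  obtain ⟨R, hR⟩ := hKcomp.isBounded.exists_norm_le
  have hπR : ∀ x, ‖π x‖ ≤ R := fun x => hR _ (proj_mem hπ x 0)
  have hrel := proj_eq hKattr hπ
  have hπm : Measurable π := measurable_proj hAnorm hrel hπR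
  have hent : ∀ n, ∑' α : Fin d → ℤ, Real.negMulLog (m (π ⁻¹' (⇑(A ^ n) '' cube d α))).toReal =
      ent m (fun x => cell B n (π x)) := fun n => by
    rw [ent_eq_tsum (isFin_cell hπm hπR B n)]
    simp_rw [image_cube_eq hAB hBA]
    rfl
  simp_rw [hent]
  refine tendsto_div_of_increments (C := Fintype.card (Fin d → Bool))
    (fun k => tendsto_increment hAB hBA hAnorm hrel hπm hπR hminv k) fun k n => ?_
  have h := abs_ent_word_cell_sub_le (m := m) hBA hrel hπm hπR k n
  rw [← abs_neg] at h
  refine le_of_eq_of_le ?_ h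
  congr 1
  ring

end
end
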